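/- arXiv:1511.08176 — 7 statements merged into one kernel-verified Lean document; each statement's English description precedes it below -/
import Mathlib

section
/- Define a sequence f on positive integers by f(1)=1, f(2)=4, and f(r+1)=2(f(r)+1) for r ≥ 2. Let p be an odd prime and n ≥ 1 an integer. Let G be a group, let T be a finite free ℤ/pⁿ-module equipped with a G-action, and suppose T has reducibility depth 𝔫_T with 𝔫_T ≤ n. Let S be a free ℤ/pⁿ-module of rank r ≥ 1 (with trivial G-action), and let H be a subgroup of Hom_{ℤ/pⁿ}(S,T) that is stable under the G-action on Hom(S,T) by postcomposition, such that the evaluation map S → Hom_G(H,T), s ↦ (h ↦ h(s)), is injective. Then H contains p^{f(r)·𝔫_T}·Hom_{ℤ/pⁿ}(S,T). -/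
/-- The sequence `f` with `f(1) = 1`, `f(2) = 4` and `f(r+1) = 2(f(r)+1)` for `r ≥ 2`. -/
def ffSeq : ℕ → ℕ
  | 0 => 0
  | 1 => 1
  | 2 => 4
  | (r + 3) => 2 * (ffSeq (r + 2) + 1)

/-- The submodule `a•M` of all multiples of `a` in `M`. -/
def smulTop {R : Type*} [CommRing R] (a : R) (M : Type*) [AddCommGroup M] [Module R M] :
    Submodule R M :=
  LinearMap.range (a • (LinearMap.id : M →ₗ[R] M))

theorem smulTop_le_comap {R : Type*} [CommRing R] (a : R) {M : Type*} [AddCommGroup M]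
    [Module R M] (f : M →ₗ[R] M) : smulTop a M ≤ (smulTop a M).comap f := by
  rintro x ⟨y, rfl⟩
  exact ⟨f y, by simp⟩

/-- The endomorphism of `M/aM` induced by an endomorphism of `M`. -/
def quotEnd {R : Type*} [CommRing R] (a : R) {M : Type*} [AddCommGroup M] [Module R M]
    (f : M →ₗ[R] M) : Module.End R (M ⧸ smulTop a M) :=
  Submodule.mapQ _ _ f (smulTop_le_comap a f)

/-- The two conditions entering the definition of the reducibility depth of a module `M`
over a ring `R` (with distinguished element `π`, e.g. `π = p` in `ℤ/pⁿ`) equipped with an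
action of `G`:
(i) every `G`-stable submodule of `M` not contained in `πM` contains `π^d M`;
(ii) for every `m ≥ 1`, the quotient of `Hom_G(M/π^m M, M/π^m M)` by the scalars is
annihilated by `π^d`. -/
def ReducibilityCond {R : Type*} [CommRing R] (π : R) {G : Type*} {M : Type*}
    [AddCommGroup M] [Module R M] (act : G → Module.End R M) (d : ℕ) : Prop :=
  (∀ N : Submodule R M, (∀ g : G, ∀ x ∈ N, act g x ∈ N) →
      ¬ N ≤ smulTop π M → smulTop (π ^ d) M ≤ N) ∧
  (∀ m : ℕ, 1 ≤ m →
    ∀ ψ : Module.End R (M ⧸ smulTop (π ^ m) M),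
      (∀ g : G, ψ ∘ₗ quotEnd (π ^ m) (act g) = quotEnd (π ^ m) (act g) ∘ₗ ψ) →
      ∃ c : R, π ^ d • ψ = c • (LinearMap.id : M ⧸ smulTop (π ^ m) M →ₗ[R] M ⧸ smulTop (π ^ m) M))

/-- `d` is the reducibility depth of `M`: the least integer satisfying the two conditions. -/
def HasReducibilityDepth {R : Type*} [CommRing R] (π : R) {G : Type*} {M : Type*}
    [AddCommGroup M] [Module R M] (act : G → Module.End R M) (d : ℕ) : Prop :=
  ReducibilityCond π act d ∧ ∀ e : ℕ, ReducibilityCond π act e → d ≤ e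

/-!
Evaluation at the vectors of a basis of `S` turns the theorem into a density statement: if
`f₁, …, f_r : X → T` are equivariant and linearly independent, then the image of
`(f₁, …, f_r) : X → T ^ r` contains `p ^ (f(r) * 𝔫) T ^ r`.

By induction, the image of `F = (f₂, …, f_r)` contains `p ^ e T ^ (r - 1)` for some `e`. Let
`K = f₁ (ker F)` and let `a ≤ n` be largest with `K ⊆ p ^ a T`, so that `p ^ (a + 𝔫) T ⊆ K` by
condition (i). Lifting `p ^ e y` through `F` and applying `f₁` defines an equivariant map
`T ^ (r - 1) → T / p ^ a T`, whose components are scalars after multiplication by `p ^ 𝔫`, by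
condition (ii). This gives a congruence `p ^ (e + 𝔫) f₁ ≡ ∑ cᵢ fᵢ` modulo `p ^ a`, and linear
independence forces `p ^ a ∣ p ^ (e + 𝔫)`. Hence `p ^ (e + 2𝔫) T ⊆ K`, and the image of `(f₁, F)`
contains `p ^ (2e + 2𝔫) T ^ r`.
-/

theorem ffSeq_add_two (k : ℕ) : ffSeq (k + 2) = 2 * (ffSeq (k + 1) + 1) := by
  cases k <;> rfl

/-- For `a + b = n`, multiplication by `π ^ a` followed by multiplication by `π ^ b` is an exact
sequence `R → R → R`. The class of a nonzerodivisor `ϖ` in `A / (ϖ ^ n)` has this property, which is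
all that is needed of `p` in `ℤ/pⁿ`. -/
structure IsExactNilpotent {R : Type*} [CommRing R] (π : R) (n : ℕ) : Prop where
  pow_eq_zero : π ^ n = 0
  pow_dvd_of_pow_mul_eq_zero : ∀ {a b : ℕ}, a + b = n → ∀ {x : R}, π ^ b * x = 0 → π ^ a ∣ x

theorem isExactNilpotent_natCast_zmod {q : ℕ} (hq : q ≠ 0) (n : ℕ) :
    IsExactNilpotent (q : ZMod (q ^ n)) n where
  pow_eq_zero := by rw [← Nat.cast_pow, ZMod.natCast_self]
  pow_dvd_of_pow_mul_eq_zero {a b} hab x hx := by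
    obtain ⟨m, rfl⟩ := ZMod.intCast_surjective x
    have hdvd : (q : ℤ) ^ b * q ^ a ∣ (q : ℤ) ^ b * m := by
      rw [← pow_add, add_comm, hab]
      exact_mod_cast (ZMod.intCast_zmod_eq_zero_iff_dvd ((q : ℤ) ^ b * m) (q ^ n)).1 (mod_cast hx)
    have hm : (q : ℤ) ^ a ∣ m := Int.dvd_of_mul_dvd_mul_left (pow_ne_zero b (mod_cast hq)) hdvd
    simpa using (Int.castRingHom (ZMod (q ^ n))).map_dvd hm

section LinearAlgebra

variable {R : Type*} [CommRing R] {π : R} {n : ℕ}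
  {M : Type*} [AddCommGroup M] [Module R M] {X : Type*} [AddCommGroup X] [Module R X]

theorem mem_smulTop {a : R} {x : M} : x ∈ smulTop a M ↔ ∃ y, a • y = x := Iff.rfl

theorem smul_quotient_smulTop_eq_zero (a : R) (z : M ⧸ smulTop a M) : a • z = 0 := by
  obtain ⟨x, rfl⟩ := (smulTop a M).mkQ_surjective z
  exact (Submodule.Quotient.mk_eq_zero _).2 ⟨x, rfl⟩

theorem exists_linearMap_eq_of_smulTop_le_range {N Q : Type*} [AddCommGroup N] [Module R N]
    [AddCommGroup Q] [Module R Q] {F : X →ₗ[R] N} {g : X →ₗ[R] Q} {c : R}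
    (hrange : smulTop c N ≤ LinearMap.range F) (hker : LinearMap.ker F ≤ LinearMap.ker g) :
    ∃ Θ : N →ₗ[R] Q, ∀ x y, F x = c • y → Θ y = g x := by
  let lift : N →ₗ[R] LinearMap.range F :=
    (c • LinearMap.id).codRestrict _ fun y => hrange ⟨y, rfl⟩
  refine ⟨(LinearMap.ker F).liftQ g hker ∘ₗ F.quotKerEquivRange.symm ∘ₗ lift, fun x y hxy => ?_⟩
  have hlift : lift y = ⟨F x, F.mem_range_self x⟩ := Subtype.ext hxy.symm
  simp [hlift]

theorem smulTop_mul_le_range_pi {k : ℕ} {f : Fin (k + 1) → X →ₗ[R] M} {a b : R}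
    (htail : smulTop a (Fin k → M) ≤ LinearMap.range (LinearMap.pi fun i => f i.succ))
    (hhead : smulTop b M ≤ (LinearMap.ker (LinearMap.pi fun i : Fin k => f i.succ)).map (f 0)) :
    smulTop (a * b) (Fin (k + 1) → M) ≤ LinearMap.range (LinearMap.pi f) := by
  rintro _ ⟨φ, rfl⟩
  obtain ⟨x, hx⟩ := htail (mem_smulTop.2 ⟨Fin.tail φ, rfl⟩)
  obtain ⟨z, hz, hz0⟩ := hhead (mem_smulTop.2 ⟨a • φ 0 - f 0 x, rfl⟩)
  refine ⟨b • x + z, funext fun i => ?_⟩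
  cases i using Fin.cases with
  | zero => simp [hz0, smul_sub, mul_smul, smul_comm b a]
  | succ j =>
    have hxj : f j.succ x = a • φ j.succ := congrFun hx j
    have hzj : f j.succ z = 0 := congrFun hz j
    simp [hxj, hzj, mul_smul, smul_comm b a]

theorem IsExactNilpotent.pow_dvd_of_sum_smul_mem_smulTop (hπ : IsExactNilpotent π n) {a : ℕ}
    (ha : a ≤ n) {ι : Type*} [Fintype ι] {f : ι → X →ₗ[R] M} (hf : LinearIndependent R f)
    {s : ι → R} (hs : ∀ x, ∑ i, s i • f i x ∈ smulTop (π ^ a) M) (i : ι) : π ^ a ∣ s i := by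
  have hzero : ∑ i, (π ^ (n - a) * s i) • f i = 0 := by
    ext x
    obtain ⟨y, hy⟩ := mem_smulTop.1 (hs x)
    calc (∑ i, (π ^ (n - a) * s i) • f i) x
        = π ^ (n - a) • ∑ i, s i • f i x := by simp [Finset.smul_sum, mul_smul]
      _ = π ^ n • y := by rw [← hy, smul_smul, ← pow_add, Nat.sub_add_cancel ha]
      _ = 0 := by rw [hπ.pow_eq_zero, zero_smul]
  exact hπ.pow_dvd_of_pow_mul_eq_zero (Nat.add_sub_cancel' ha)
    (Fintype.linearIndependent_iff.1 hf _ hzero i)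

end LinearAlgebra

namespace ReducibilityCond

variable {R : Type*} [CommRing R] {π t : R} {n d : ℕ} {G : Type*}
  {M : Type*} [AddCommGroup M] [Module R M] {act : G → Module.End R M}
  {X : Type*} [AddCommGroup X] [Module R X] {actX : G → Module.End R X}

theorem exists_le_smulTop_and_smulTop_le (hd : ReducibilityCond π act d) (hπ : π ^ n = 0)
    {K : Submodule R M} (hK : ∀ g, ∀ x ∈ K, act g x ∈ K) :
    ∃ a ≤ n, K ≤ smulTop (π ^ a) M ∧ smulTop (π ^ (a + d)) M ≤ K := by
  classical
  let P (a : ℕ) : Prop := K ≤ smulTop (π ^ a) M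
  let a := Nat.findGreatest P n
  have ha : P a := Nat.findGreatest_spec (P := P) n.zero_le fun x _ => ⟨x, by simp⟩
  refine ⟨a, Nat.findGreatest_le n, ha, ?_⟩
  obtain han | han : a = n ∨ a < n := (Nat.findGreatest_le n).eq_or_lt
  · rintro _ ⟨y, rfl⟩
    simp [han, pow_add, hπ]
  have hstable : ∀ g, ∀ x ∈ K.comap (π ^ a • LinearMap.id), act g x ∈ K.comap (π ^ a • .id) :=
    fun g x hx => by simpa using hK g _ hx
  have hnot_le : ¬ K.comap (π ^ a • LinearMap.id) ≤ smulTop π M := fun hle =>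
    Nat.findGreatest_is_greatest (P := P) (Nat.lt_succ_self a) han fun x hx => by
      obtain ⟨y, rfl⟩ := mem_smulTop.1 (ha hx)
      obtain ⟨z, rfl⟩ := mem_smulTop.1 (hle (show y ∈ _ by simpa using hx))
      exact mem_smulTop.2 ⟨z, by rw [pow_succ, mul_smul]⟩
  rintro _ ⟨y, rfl⟩
  simpa [pow_add, mul_smul, smul_comm (π ^ a)] using
    hd.1 _ hstable hnot_le (mem_smulTop.2 ⟨y, rfl⟩)

theorem smulTop_mul_le (hd : ReducibilityCond π act d) (hπ : π ^ n = 0) {K : Submodule R M}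
    (hK : ∀ g, ∀ x ∈ K, act g x ∈ K) {c : R}
    (hc : ∀ a ≤ n, K ≤ smulTop (π ^ a) M → π ^ a ∣ c) : smulTop (c * π ^ d) M ≤ K := by
  obtain ⟨a, han, hKa, haK⟩ := hd.exists_le_smulTop_and_smulTop_le hπ hK
  obtain ⟨b, rfl⟩ := hc a han hKa
  rintro _ ⟨y, rfl⟩
  exact haK (mem_smulTop.2 ⟨b • y, by simp [smul_smul, pow_add, mul_right_comm]⟩)

theorem exists_smul_eq_smul_mkQ (hd : ReducibilityCond π act d) {a : ℕ}
    (θ : M →ₗ[R] M ⧸ smulTop (π ^ a) M)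
    (hθ : ∀ g x, θ (act g x) = quotEnd (π ^ a) (act g) (θ x)) :
    ∃ c : R, ∀ x, π ^ d • θ x = c • (smulTop (π ^ a) M).mkQ x := by
  obtain rfl | ha : a = 0 ∨ 1 ≤ a := by lia
  · have hzero (z : M ⧸ smulTop (π ^ 0) M) : z = 0 := by
      simpa using smul_quotient_smulTop_eq_zero (π ^ 0) z
    exact ⟨0, fun x => (hzero _).trans (hzero _).symm⟩
  have hker : smulTop (π ^ a) M ≤ LinearMap.ker θ := by
    rintro _ ⟨y, rfl⟩
    simpa using smul_quotient_smulTop_eq_zero (π ^ a) (θ y)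
  obtain ⟨c, hc⟩ := hd.2 a ha ((smulTop (π ^ a) M).liftQ θ hker) fun g =>
    Submodule.linearMap_qext _ (LinearMap.ext fun x => by simpa [quotEnd] using hθ g x)
  exact ⟨c, fun x => by simpa using LinearMap.congr_fun hc ((smulTop (π ^ a) M).mkQ x)⟩

theorem exists_smul_sub_sum_smul_mem_smulTop (hd : ReducibilityCond π act d) {ι : Type*}
    [Fintype ι] {f₀ : X →ₗ[R] M} {f : ι → X →ₗ[R] M}
    (hf₀ : ∀ g x, f₀ (actX g x) = act g (f₀ x)) (hf : ∀ i g x, f i (actX g x) = act g (f i x))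
    (hrange : smulTop t (ι → M) ≤ LinearMap.range (LinearMap.pi f)) {a : ℕ}
    (hker : (LinearMap.ker (LinearMap.pi f)).map f₀ ≤ smulTop (π ^ a) M) :
    ∃ c : ι → R, ∀ x, (t * π ^ d) • f₀ x - ∑ i, c i • f i x ∈ smulTop (π ^ a) M := by
  classical
  obtain ⟨Θ, hΘ⟩ := exists_linearMap_eq_of_smulTop_le_range hrange
    (g := (smulTop (π ^ a) M).mkQ ∘ₗ f₀) fun x hx =>
      (Submodule.Quotient.mk_eq_zero _).2 (hker ⟨x, hx, rfl⟩)
  have hequiv (i : ι) (g : G) (y : M) :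
      Θ (Pi.single i (act g y)) = quotEnd (π ^ a) (act g) (Θ (Pi.single i y)) := by
    obtain ⟨x, hx⟩ := hrange (mem_smulTop.2 ⟨Pi.single i y, rfl⟩)
    have hgx : LinearMap.pi f (actX g x) = t • Pi.single i (act g y) := by
      funext j
      have hxj : f j x = t • (Pi.single i y : ι → M) j := congrFun hx j
      rw [LinearMap.pi_apply, hf, hxj, map_smul, Pi.smul_apply,
        Pi.apply_single (fun _ => act g) fun _ => map_zero _]
    rw [hΘ _ _ hgx, hΘ _ _ hx, LinearMap.comp_apply, hf₀]
    rfl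
  choose c hc using fun i =>
    hd.exists_smul_eq_smul_mkQ (Θ ∘ₗ LinearMap.single R (fun _ => M) i) (hequiv i)
  refine ⟨c, fun x => (Submodule.Quotient.eq _).1 ?_⟩
  calc (smulTop (π ^ a) M).mkQ ((t * π ^ d) • f₀ x)
      = π ^ d • Θ (LinearMap.pi f x) := by
        rw [hΘ (t • x) _ (map_smul _ _ _)]
        simp only [LinearMap.comp_apply, map_smul, smul_smul, mul_comm]
    _ = ∑ i, π ^ d • Θ (Pi.single i (f i x)) := by
        rw [← Finset.univ_sum_single (LinearMap.pi f x), map_sum, Finset.smul_sum]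
        rfl
    _ = ∑ i, c i • (smulTop (π ^ a) M).mkQ (f i x) := Finset.sum_congr rfl fun i _ => hc i _
    _ = (smulTop (π ^ a) M).mkQ (∑ i, c i • f i x) := by simp only [map_sum, map_smul]

theorem smulTop_le_map_ker_pi (hd : ReducibilityCond π act d) (hπ : IsExactNilpotent π n) {k : ℕ}
    {f : Fin (k + 1) → X →ₗ[R] M} (hf : ∀ i g x, f i (actX g x) = act g (f i x))
    (hli : LinearIndependent R f)
    (htail : smulTop t (Fin k → M) ≤ LinearMap.range (LinearMap.pi fun i => f i.succ)) :
    smulTop (t * π ^ d * π ^ d) M ≤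
      (LinearMap.ker (LinearMap.pi fun i : Fin k => f i.succ)).map (f 0) := by
  refine hd.smulTop_mul_le hπ.pow_eq_zero ?_ fun a ha hKa => ?_
  · rintro g _ ⟨x, hx, rfl⟩
    refine ⟨actX g x, funext fun i => ?_, hf 0 g x⟩
    have hxi : f i.succ x = 0 := congrFun hx i
    simp [hf, hxi]
  · obtain ⟨c, hc⟩ := hd.exists_smul_sub_sum_smul_mem_smulTop (hf 0) (fun i => hf i.succ) htail hKa
    have hdvd := hπ.pow_dvd_of_sum_smul_mem_smulTop ha hli
      (s := Fin.cons (t * π ^ d) fun i => -c i)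
      fun x => by simpa [Fin.sum_univ_succ, sub_eq_add_neg] using hc x
    simpa using hdvd 0

theorem smulTop_le_range_pi_of_unique (hd : ReducibilityCond π act d) (hπ : IsExactNilpotent π n)
    {ι : Type*} [Unique ι] {f : ι → X →ₗ[R] M} (hf : ∀ i g x, f i (actX g x) = act g (f i x))
    (hli : LinearIndependent R f) : smulTop (π ^ d) (ι → M) ≤ LinearMap.range (LinearMap.pi f) := by
  have hrange : smulTop (1 * π ^ d) M ≤ LinearMap.range (f default) := by
    refine hd.smulTop_mul_le hπ.pow_eq_zero ?_ fun a ha hle => ?_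
    · rintro g _ ⟨x, rfl⟩
      exact ⟨actX g x, hf default g x⟩
    · exact hπ.pow_dvd_of_sum_smul_mem_smulTop ha hli (s := 1) (fun x => hle ⟨x, by simp⟩) default
  rintro _ ⟨φ, rfl⟩
  obtain ⟨x, hx⟩ := hrange (mem_smulTop.2 ⟨φ default, rfl⟩)
  exact ⟨x, funext fun i => by simpa [Unique.eq_default i] using hx⟩

theorem smulTop_le_range_pi (hd : ReducibilityCond π act d) (hπ : IsExactNilpotent π n) {r : ℕ}
    {f : Fin r → X →ₗ[R] M} (hf : ∀ i g x, f i (actX g x) = act g (f i x))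
    (hli : LinearIndependent R f) :
    smulTop (π ^ (ffSeq r * d)) (Fin r → M) ≤ LinearMap.range (LinearMap.pi f) := by
  induction r using Nat.twoStepInduction with
  | zero => exact fun φ _ => ⟨0, Subsingleton.elim _ _⟩
  | one => simpa [ffSeq] using hd.smulTop_le_range_pi_of_unique hπ hf hli
  | more k _ ih =>
    have htail := ih (fun i => hf i.succ) (hli.comp _ (Fin.succ_injective _))
    have hpow : π ^ (ffSeq (k + 2) * d) =
        π ^ (ffSeq (k + 1) * d) * (π ^ (ffSeq (k + 1) * d) * π ^ d * π ^ d) := by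
      rw [ffSeq_add_two]
      ring
    rw [hpow]
    exact smulTop_mul_le_range_pi htail (hd.smulTop_le_map_ker_pi hπ hf hli htail)

end ReducibilityCond

theorem statement0_general {R : Type*} [CommRing R] {π : R} {n : ℕ} (hπ : IsExactNilpotent π n)
    {G M : Type*} [AddCommGroup M] [Module R M] {act : G → Module.End R M} {d : ℕ}
    (hd : ReducibilityCond π act d) {S : Type*} [AddCommGroup S] [Module R S] {r : ℕ}
    (b : Module.Basis (Fin r) R S) (H : Submodule R (S →ₗ[R] M))
    (hstab : ∀ g, ∀ h ∈ H, act g ∘ₗ h ∈ H)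
    (hinj : Function.Injective fun (s : S) => fun (h : H) => (h : S →ₗ[R] M) s) (φ : S →ₗ[R] M) :
    π ^ (ffSeq r * d) • φ ∈ H := by
  let ev : S →ₗ[R] H →ₗ[R] M := H.subtype.flip
  have hli : LinearIndependent R (ev ∘ b) :=
    b.linearIndependent.map' ev <| LinearMap.ker_eq_bot.2 fun s t hst =>
      hinj (funext fun h => LinearMap.congr_fun hst h)
  obtain ⟨h, hh⟩ := hd.smulTop_le_range_pi hπ
    (actX := fun g => ((act g).compRight R).restrict (hstab g)) (fun _ _ _ => rfl) hli
    (mem_smulTop.2 ⟨fun i => φ (b i), rfl⟩)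
  have hφ : (h : S →ₗ[R] M) = π ^ (ffSeq r * d) • φ := b.ext fun i => congrFun hh i
  exact hφ ▸ h.2

/-- Let `p` be an odd prime, `n ≥ 1`, `T` a finite free `ℤ/pⁿ`-module with an
action of a group `G` having reducibility depth `𝔫 ≤ n`, and `S` a free `ℤ/pⁿ`-module of rank
`r ≥ 1` with trivial `G`-action.  If `H` is a subgroup of `Hom(S,T)`, stable under the `G`-action
by postcomposition, such that the evaluation map `S → Hom_G(H,T)` is injective, then
`H ⊇ p^{f(r)·𝔫}·Hom(S,T)`. -/
theorem statement0 (p : ℕ) (hp : p.Prime) (hodd : Odd p) (n : ℕ) (hn : 1 ≤ n)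
    {G : Type*} [Group G]
    {T : Type*} [AddCommGroup T] [Module (ZMod (p ^ n)) T]
    [Module.Finite (ZMod (p ^ n)) T] [Module.Free (ZMod (p ^ n)) T]
    (ρ : G →* Module.End (ZMod (p ^ n)) T)
    (𝔫 : ℕ) (hdepth : HasReducibilityDepth ((p : ZMod (p ^ n))) (fun g => ρ g) 𝔫)
    (h𝔫n : 𝔫 ≤ n)
    {S : Type*} [AddCommGroup S] [Module (ZMod (p ^ n)) S]
    [Module.Finite (ZMod (p ^ n)) S] [Module.Free (ZMod (p ^ n)) S]
    (r : ℕ) (hr : 1 ≤ r) (hrank : Module.finrank (ZMod (p ^ n)) S = r)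
    (H : AddSubgroup (S →ₗ[ZMod (p ^ n)] T))
    (hstab : ∀ g : G, ∀ h ∈ H, ρ g ∘ₗ h ∈ H)
    (hinj : Function.Injective fun (s : S) => fun (h : H) => (h : S →ₗ[ZMod (p ^ n)] T) s) :
    ∀ φ : S →ₗ[ZMod (p ^ n)] T, ((p : ZMod (p ^ n)) ^ (ffSeq r * 𝔫)) • φ ∈ H := by
  have : Fact (1 < p ^ n) := ⟨Nat.one_lt_pow (by lia) hp.one_lt⟩
  exact statement0_general (isExactNilpotent_natCast_zmod hp.ne_zero n) hdepth.1
    (Module.finBasisOfFinrankEq _ _ hrank) (AddSubgroup.toZModSubmodule _ H) hstab hinj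
end

section
/- Let p be an odd prime, n ≥ 1 an integer, Γ a group, T a finite free ℤ/pⁿ-module, and ρ: Γ → GL(T) a homomorphism whose image G contains a nontrivial scalar automorphism of order coprime to p (multiplication by λ ∈ (ℤ/pⁿ)^× with λ ≠ 1 of order coprime to p). Let Λ = ker ρ. Then restriction of 1-cocycles induces an isomorphism H¹(Γ, T) ≅ Hom_G(Λ^{ab}, T), the group of G-equivariant homomorphisms from the abelianization of Λ to T, where G = Γ/Λ acts on Λ^{ab} by conjugation and on T through ρ. -/
/-!
The argument is Sah's lemma in degree one. If `z` is central in `Γ` modulo `Λ`, and `Λ` acts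
trivially on `T`, then every 1-cocycle `c` satisfies
`c ⁅z, g⁆ = (z - 1) • c g - (g - 1) • c z` with `⁅z, g⁆ ∈ Λ`. When `z - 1` is invertible on `T`,
this recovers `c` from its restriction to `Λ` up to the coboundary of `(z - 1)⁻¹ • c z`;
conversely, the normalisation `c z = 0` dictates the extension
`c g = (z - 1)⁻¹ • φ ⁅z, g⁆` of an equivariant homomorphism `φ`.
A scalar `u ≠ 1` in `(ℤ/pⁿ)ˣ` of order coprime to `p` has `u - 1` invertible because the kernel of
`(ℤ/pⁿ)ˣ → (ℤ/p)ˣ` is a `p`-group.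
-/

section Sah

open groupCohomology
open scoped commutatorElement

variable {Γ T : Type*} [Group Γ] [AddCommGroup T] [DistribMulAction Γ T] {c : Γ → T}

/-- A homomorphism from a normal subgroup `Λ` of `Γ` to a `Γ`-module `T` that intertwines
conjugation with the action on `T`. Since `T` is commutative, this is the same as a
`Γ`-equivariant homomorphism on the abelianization of `Λ`. -/
structure IsEquivariantHom (Λ : Subgroup Γ) [Λ.Normal] (φ : Λ → T) : Prop where
  map_mul (a b : Λ) : φ (a * b) = φ a + φ b
  map_conj (g : Γ) (a : Λ) : φ (MulAut.conjNormal g a) = g • φ a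

theorem isEquivariantHom_iff {Λ : Subgroup Γ} [Λ.Normal] {φ : Λ → T} :
    IsEquivariantHom Λ φ ↔ (∀ a b : Λ, φ (a * b) = φ a + φ b) ∧
      ∀ g : Γ, ∀ a b : Λ, g * ↑a * g⁻¹ = ↑b → φ b = g • φ a := by
  refine ⟨fun hφ => ⟨hφ.map_mul, fun g a b hab => ?_⟩,
    fun ⟨hmul, hconj⟩ => ⟨hmul, fun g a => hconj g a _ (MulAut.conjNormal_apply g a).symm⟩⟩
  have hb : b = MulAut.conjNormal g a := Subtype.ext (by rw [← hab, MulAut.conjNormal_apply])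
  rw [hb, hφ.map_conj]

theorem map_mul_of_isCocycle₁_of_smul_eq (hc : IsCocycle₁ c) {a : Γ} (ha : ∀ x : T, a • x = x)
    (g : Γ) : c (a * g) = c a + c g := by
  rw [hc, ha, add_comm]

theorem map_conj_of_isCocycle₁_of_smul_eq (hc : IsCocycle₁ c) {a : Γ} (ha : ∀ x : T, a • x = x)
    (g : Γ) : c (g * a * g⁻¹) = g • c a := by
  have hconj (x : T) : (g * a * g⁻¹) • x = x := by
    rw [mul_smul, mul_smul, ha, smul_inv_smul]
  have h : c (g * a * g⁻¹) + c g = g • c a + c g := by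
    rw [← map_mul_of_isCocycle₁_of_smul_eq hc hconj, inv_mul_cancel_right, hc]
  exact add_right_cancel h

theorem isEquivariantHom_restrict_of_isCocycle₁ {Λ : Subgroup Γ} [Λ.Normal]
    (hΛ : ∀ a ∈ Λ, ∀ x : T, a • x = x) (hc : IsCocycle₁ c) :
    IsEquivariantHom Λ fun a => c a where
  map_mul a b := map_mul_of_isCocycle₁_of_smul_eq hc (hΛ a a.2) b
  map_conj g a := by
    rw [MulAut.conjNormal_apply, map_conj_of_isCocycle₁_of_smul_eq hc (hΛ a a.2)]

theorem commutatorElement_eq_mul_div_mul {G : Type*} [Group G] (z g : G) :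
    ⁅z, g⁆ = z * g / (g * z) := by
  rw [commutatorElement_def, div_eq_mul_inv, mul_inv_rev, ← mul_assoc]

theorem commutatorElement_mul_mul {G : Type*} [Group G] (z g : G) : ⁅z, g⁆ * (g * z) = z * g := by
  rw [commutatorElement_eq_mul_div_mul, div_mul_cancel]

theorem smul_smul_comm_of_commutatorElement_smul_eq {z g : Γ} (hzg : ∀ x : T, ⁅z, g⁆ • x = x)
    (x : T) : z • g • x = g • z • x := by
  rw [smul_smul, ← commutatorElement_mul_mul z g, mul_smul, hzg, mul_smul]

theorem map_commutatorElement_of_isCocycle₁ (hc : IsCocycle₁ c) {z g : Γ}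
    (hzg : ∀ x : T, ⁅z, g⁆ • x = x) :
    c ⁅z, g⁆ = (z • c g - c g) - (g • c z - c z) := by
  have h : c (z * g) = c ⁅z, g⁆ + c (g * z) := by
    rw [← map_mul_of_isCocycle₁_of_smul_eq hc hzg, commutatorElement_mul_mul]
  rw [hc z g, hc g z] at h
  rw [eq_sub_of_add_eq h.symm]
  abel

variable {Λ : Subgroup Γ} {z : Γ}

theorem isCoboundary₁_of_isCocycle₁_of_forall_mem_eq_zero (hΛ : ∀ a ∈ Λ, ∀ x : T, a • x = x)
    (hz : ∀ g, ⁅z, g⁆ ∈ Λ) (hbij : Function.Bijective fun x : T => z • x - x)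
    (hc : IsCocycle₁ c) (hzero : ∀ a ∈ Λ, c a = 0) : IsCoboundary₁ c := by
  obtain ⟨x, hx : z • x - x = c z⟩ := hbij.surjective (c z)
  refine ⟨x, fun g => hbij.injective ?_⟩
  have hzg := hΛ _ (hz g)
  have hcg : z • c g - c g = g • c z - c z := by
    rw [← sub_eq_zero, ← map_commutatorElement_of_isCocycle₁ hc hzg, hzero _ (hz g)]
  calc z • (g • x - x) - (g • x - x)
      = g • (z • x - x) - (z • x - x) := by
        rw [smul_sub, smul_sub, smul_smul_comm_of_commutatorElement_smul_eq hzg]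
        abel
    _ = z • c g - c g := by rw [hx, hcg]

variable [Λ.Normal] {φ : Λ → T}

theorem IsEquivariantHom.map_commutatorElement_mul (hφ : IsEquivariantHom Λ φ)
    (hz : ∀ g, ⁅z, g⁆ ∈ Λ) (g h : Γ) :
    φ ⟨⁅z, g * h⁆, hz _⟩ = φ ⟨⁅z, g⁆, hz g⟩ + g • φ ⟨⁅z, h⁆, hz h⟩ := by
  rw [← hφ.map_conj, ← hφ.map_mul]
  congr 1
  ext
  simp only [commutatorElement_mul_right_eq_mul_conj, Subgroup.coe_mul, MulAut.conjNormal_apply,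
    mul_assoc]

theorem IsEquivariantHom.map_commutatorElement_coe (hφ : IsEquivariantHom Λ φ) (a : Λ)
    (hza : ⁅z, (a : Γ)⁆ ∈ Λ) : φ ⟨⁅z, (a : Γ)⁆, hza⟩ = z • φ a - φ a := by
  have hmul : ⟨⁅z, (a : Γ)⁆, hza⟩ * a = MulAut.conjNormal z a := by
    ext
    rw [Subgroup.coe_mul, MulAut.conjNormal_apply]
    exact (conj_eq_commutatorElement_mul ..).symm
  rw [← hφ.map_conj, ← hmul, hφ.map_mul, add_sub_cancel_right]

theorem IsEquivariantHom.exists_isCocycle₁ (hφ : IsEquivariantHom Λ φ)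
    (hΛ : ∀ a ∈ Λ, ∀ x : T, a • x = x) (hz : ∀ g, ⁅z, g⁆ ∈ Λ)
    (hbij : Function.Bijective fun x : T => z • x - x) :
    ∃ c : Γ → T, IsCocycle₁ c ∧ ∀ a : Λ, c a = φ a := by
  choose c hc using fun g => hbij.surjective (φ ⟨⁅z, g⁆, hz g⟩)
  beta_reduce at hc
  refine ⟨c, fun g h => hbij.injective ?_, fun a => hbij.injective ?_⟩
  · calc z • c (g * h) - c (g * h)
        = (z • c g - c g) + g • (z • c h - c h) := by
          rw [hc, hc, hc, hφ.map_commutatorElement_mul hz]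
      _ = z • (g • c h + c g) - (g • c h + c g) := by
          rw [smul_add, smul_sub, smul_smul_comm_of_commutatorElement_smul_eq (hΛ _ (hz g))]
          abel
  · exact (hc a).trans (hφ.map_commutatorElement_coe a (hz a))

theorem statement2_general (hΛ : ∀ a ∈ Λ, ∀ x : T, a • x = x) (hz : ∀ g, ⁅z, g⁆ ∈ Λ)
    (hbij : Function.Bijective fun x : T => z • x - x) :
    (∀ c : Γ → T, IsCocycle₁ c → IsEquivariantHom Λ fun a => c a) ∧
    (∀ φ : Λ → T, IsEquivariantHom Λ φ → ∃ c : Γ → T, IsCocycle₁ c ∧ ∀ a : Λ, c a = φ a) ∧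
    (∀ c : Γ → T, IsCocycle₁ c → (∀ a : Λ, c a = 0) → IsCoboundary₁ c) :=
  ⟨fun _ hc => isEquivariantHom_restrict_of_isCocycle₁ hΛ hc,
    fun _ hφ => hφ.exists_isCocycle₁ hΛ hz hbij,
    fun _ hc hzero => isCoboundary₁_of_isCocycle₁_of_forall_mem_eq_zero hΛ hz hbij hc
      fun a ha => hzero ⟨a, ha⟩⟩

theorem commutatorElement_mem_ker_of_commute {G M : Type*} [Group G] [Monoid M] (f : G →* M)
    {z g : G} (h : Commute (f z) (f g)) : ⁅z, g⁆ ∈ f.ker := by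
  rw [commutatorElement_eq_mul_div_mul, MonoidHom.div_mem_ker_iff, map_mul, map_mul, h.eq]

end Sah

section RootsOfUnity

theorem pow_pow_eq_one_of_dvd_sub_one {R : Type*} [CommRing R] {p n : ℕ}
    (hpn : (p : R) ^ n = 0) {x : R} (hx : (p : R) ∣ x - 1) : x ^ p ^ n = 1 := by
  have h := dvd_sub_pow_of_dvd_sub hx n
  rwa [pow_succ, hpn, zero_mul, zero_dvd_iff, one_pow, sub_eq_zero] at h

theorem eq_one_of_dvd_sub_one_of_coprime_orderOf {R : Type*} [CommRing R] {p n : ℕ}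
    (hpn : (p : R) ^ n = 0) {x : R} (hx : (p : R) ∣ x - 1) (hcop : (orderOf x).Coprime p) :
    x = 1 :=
  orderOf_eq_one_iff.mp <| (hcop.pow_right n).eq_one_of_dvd <|
    orderOf_dvd_of_pow_eq_one (pow_pow_eq_one_of_dvd_sub_one hpn hx)

theorem natCast_dvd_of_not_isUnit_zmod_pow {p n : ℕ} (hp : p.Prime) {x : ZMod (p ^ n)}
    (hx : ¬IsUnit x) : (p : ZMod (p ^ n)) ∣ x := by
  have : NeZero (p ^ n) := ⟨pow_ne_zero n hp.ne_zero⟩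
  obtain ⟨m, rfl⟩ := ZMod.natCast_zmod_surjective x
  refine Nat.cast_dvd_cast (by_contra fun hpm => hx ?_)
  rw [ZMod.isUnit_iff_coprime]
  exact (hp.coprime_iff_not_dvd.mpr hpm).symm.pow_right n

theorem isUnit_sub_one_of_coprime_orderOf {p n : ℕ} (hp : p.Prime) {x : ZMod (p ^ n)}
    (hx : x ≠ 1) (hcop : (orderOf x).Coprime p) : IsUnit (x - 1) := by
  have hpn : (p : ZMod (p ^ n)) ^ n = 0 := by rw [← Nat.cast_pow, ZMod.natCast_self]
  by_contra hnot
  exact hx (eq_one_of_dvd_sub_one_of_coprime_orderOf hpn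
    (natCast_dvd_of_not_isUnit_zmod_pow hp hnot) hcop)

end RootsOfUnity

/-- Let `p` be an odd prime, `n ≥ 1`, `Γ` a group, `T` a finite free
`ℤ/pⁿ`-module and `ρ : Γ → GL(T)` a homomorphism whose image contains a nontrivial scalar
automorphism of order coprime to `p`.  Let `Λ = ker ρ`.  Then restriction of 1-cocycles
induces an isomorphism `H¹(Γ,T) ≅ Hom_G(Λᵃᵇ, T)`: restriction of a cocycle to `Λ` is a
`G`-equivariant homomorphism, every `G`-equivariant homomorphism `Λ → T` extends to a cocycle,
and a cocycle vanishing on `Λ` is a coboundary. -/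
theorem statement2 (p n : ℕ) (hp : p.Prime) (hodd : Odd p) (hn : 1 ≤ n)
    {Γ : Type*} [Group Γ]
    {T : Type*} [AddCommGroup T] [Module (ZMod (p ^ n)) T]
    [Module.Finite (ZMod (p ^ n)) T] [Module.Free (ZMod (p ^ n)) T]
    (ρ : Γ →* Module.End (ZMod (p ^ n)) T)
    (hscalar : ∃ (u : (ZMod (p ^ n))ˣ) (g : Γ), u ≠ 1 ∧ Nat.Coprime (orderOf u) p ∧
      ρ g = (u : ZMod (p ^ n)) • (1 : Module.End (ZMod (p ^ n)) T))
    (Λ : Subgroup Γ) (hΛ : ∀ γ : Γ, γ ∈ Λ ↔ ρ γ = 1) :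
    -- restriction of a cocycle to `Λ` is a `G`-equivariant homomorphism on `Λᵃᵇ`:
    (∀ c : Γ → T, (∀ g h : Γ, c (g * h) = c g + ρ g (c h)) →
      ((∀ a b : Λ, c ↑(a * b) = c ↑a + c ↑b) ∧
       (∀ γ : Γ, ∀ a b : Λ, γ * ↑a * γ⁻¹ = ↑b → c ↑b = ρ γ (c ↑a)))) ∧
    -- surjectivity: every `G`-equivariant homomorphism is the restriction of a cocycle:
    (∀ φ : Λ → T, (∀ a b : Λ, φ (a * b) = φ a + φ b) →
      (∀ γ : Γ, ∀ a b : Λ, γ * ↑a * γ⁻¹ = ↑b → φ b = ρ γ (φ a)) →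
      ∃ c : Γ → T, (∀ g h : Γ, c (g * h) = c g + ρ g (c h)) ∧ ∀ a : Λ, c ↑a = φ a) ∧
    -- injectivity: a cocycle restricting to zero on `Λ` is a coboundary:
    (∀ c : Γ → T, (∀ g h : Γ, c (g * h) = c g + ρ g (c h)) → (∀ a : Λ, c ↑a = 0) →
      ∃ x : T, ∀ g : Γ, c g = ρ g x - x) := by
  obtain ⟨u, z, hu, hcop, hz⟩ := hscalar
  obtain rfl : Λ = ρ.ker := Subgroup.ext hΛ
  let : DistribMulAction Γ T := DistribMulAction.compHom T ρ
  have hsmul (g : Γ) (x : T) : g • x = ρ g x := rfl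
  have htriv (a : Γ) (ha : a ∈ ρ.ker) (x : T) : a • x = x := by
    rw [hsmul, MonoidHom.mem_ker.mp ha, Module.End.one_apply]
  have hcomm (g : Γ) : Commute (ρ z) (ρ g) := hz ▸ (Commute.one_left (ρ g)).smul_left _
  have hunit : IsUnit ((u : ZMod (p ^ n)) - 1) :=
    isUnit_sub_one_of_coprime_orderOf hp (Units.val_eq_one.not.mpr hu) (by rwa [orderOf_units])
  have hbij : Function.Bijective fun x : T => z • x - x := by
    simpa only [hsmul, hz, LinearMap.smul_apply, Module.End.one_apply, sub_smul, one_smul]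
      using hunit.smul_bijective (β := T)
  simpa only [groupCohomology.IsCocycle₁, groupCohomology.IsCoboundary₁, isEquivariantHom_iff,
    hsmul, and_imp, add_comm, @eq_comm _ (_ - _)] using
    statement2_general htriv (fun g => commutatorElement_mem_ker_of_commute ρ (hcomm g)) hbij
end

section
/- Let p be an odd prime, G a group, and I a subgroup of G. Let T be a finite free ℤ_p-module with an action of G such that I acts trivially on T, set V = T ⊗_{ℤ_p} ℚ_p with the induced G-action, and assume H¹(G, V) = 0. Then for every integer n ≥ 1, the composite map H¹(G, T) → H¹(G, T/pⁿT) → H¹(I, T/pⁿT), consisting of the map induced by reduction modulo pⁿ followed by restriction to I, is the zero map. -/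
open TensorProduct

/-!
Since `T` is free, it embeds in `V`, where a `T`-valued cocycle `c` becomes a coboundary
`g ↦ g v - v`. This vanishes at every `g` acting trivially on `T`, so `c` itself is zero on `I`,
already before reduction modulo `pⁿ`.
-/

section OneCocycle

variable {R S G M N : Type*} [Semiring R] [Semiring S] [Monoid G]
  [AddCommGroup M] [Module R M] [AddCommGroup N] [Module S N]

/-- A 1-cocycle (crossed homomorphism) of `G` with values in the representation `ρ`. -/
def IsOneCocycle (ρ : Representation R G M) (c : G → M) : Prop :=
  ∀ g h, c (g * h) = c g + ρ g (c h)

/-- A 1-coboundary (principal crossed homomorphism) of `G` with values in the representation `ρ`;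
`H¹(G, M) = 0` says that every 1-cocycle is one. -/
def IsOneCoboundary (ρ : Representation R G M) (c : G → M) : Prop :=
  ∃ m, ∀ g, c g = ρ g m - m

theorem IsOneCocycle.map {ρ : Representation R G M} {σ : Representation S G N} {c : G → M}
    (hc : IsOneCocycle ρ c) (φ : M →+ N) (hφ : ∀ g m, φ (ρ g m) = σ g (φ m)) :
    IsOneCocycle σ (φ ∘ c) := fun g h => by
  simp only [Function.comp_apply, hc g h, map_add, hφ]

theorem IsOneCoboundary.apply_eq_zero {ρ : Representation R G M} {c : G → M}
    (hc : IsOneCoboundary ρ c) {g : G} (hg : ρ g = 1) : c g = 0 := by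
  obtain ⟨m, hm⟩ := hc
  rw [hm, hg, Module.End.one_apply, sub_self]

end OneCocycle

section BaseChange

variable {R G M : Type*} (K : Type*) [CommRing R] [Ring K] [Algebra R K] [Monoid G]
  [AddCommGroup M] [Module R M]

/-- The extension of scalars `K ⊗ M` of a representation `M`, with `G` acting on the second
factor. -/
def baseChangeRep (ρ : Representation R G M) : Representation K G (K ⊗[R] M) :=
  (Module.End.baseChangeHom R K M : Module.End R M →* Module.End K (K ⊗[R] M)).comp ρ

theorem baseChangeRep_eq_one {ρ : Representation R G M} {g : G} (hg : ρ g = 1) :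
    baseChangeRep K ρ g = 1 :=
  (congrArg (Module.End.baseChangeHom R K M) hg).trans (map_one _)

theorem IsOneCocycle.baseChange {ρ : Representation R G M} {c : G → M} (hc : IsOneCocycle ρ c) :
    IsOneCocycle (baseChangeRep K ρ) (fun g => 1 ⊗ₜ c g) :=
  hc.map (TensorProduct.mk R K M 1).toAddMonoidHom fun g m =>
    ((ρ g).baseChange_tmul (A := K) 1 m).symm

theorem statement4_general [FaithfulSMul R K] [Module.Flat R M] (ρ : Representation R G M)
    (hK : ∀ c, IsOneCocycle (baseChangeRep K ρ) c → IsOneCoboundary (baseChangeRep K ρ) c)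
    {c : G → M} (hc : IsOneCocycle ρ c) {g : G} (hg : ρ g = 1) : c g = 0 := by
  have h_tmul : (1 : K) ⊗ₜ[R] c g = 0 :=
    (hK _ (hc.baseChange K)).apply_eq_zero (baseChangeRep_eq_one K hg)
  exact Module.Flat.tensorProduct_mk_injective R M K (h_tmul.trans (tmul_zero M 1).symm)

end BaseChange

/-- Let `p` be an odd prime, `G` a group, `I ≤ G` a subgroup, `T` a finite
free `ℤ_p`-module with a `G`-action on which `I` acts trivially, and `V = ℚ_p ⊗_{ℤ_p} T` with
the induced `G`-action.  If `H¹(G,V) = 0` (every cocycle valued in `V` is a coboundary), then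
for every `n ≥ 1` the composite `H¹(G,T) → H¹(G,T/pⁿT) → H¹(I,T/pⁿT)` vanishes: the reduction
of any `G`-cocycle valued in `T` restricts to an `I`-coboundary in `T/pⁿT`. -/
theorem statement4 (p : ℕ) [Fact p.Prime] (hodd : Odd p)
    {G : Type*} [Group G] (I : Subgroup G)
    {T : Type*} [AddCommGroup T] [Module ℤ_[p] T]
    [Module.Finite ℤ_[p] T] [Module.Free ℤ_[p] T]
    (ρ : G →* Module.End ℤ_[p] T)
    (hI : ∀ a ∈ I, ρ a = 1)
    (hV : ∀ c : G → ℚ_[p] ⊗[ℤ_[p]] T,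
      (∀ g h : G, c (g * h) = c g + (ρ g).baseChange ℚ_[p] (c h)) →
      ∃ v : ℚ_[p] ⊗[ℤ_[p]] T, ∀ g : G, c g = (ρ g).baseChange ℚ_[p] v - v) :
    ∀ n : ℕ, 1 ≤ n →
      ∀ c : G → T, (∀ g h : G, c (g * h) = c g + ρ g (c h)) →
        ∃ x : T ⧸ smulTop ((p : ℤ_[p]) ^ n) T,
          ∀ a ∈ I, Submodule.Quotient.mk (c a) = quotEnd ((p : ℤ_[p]) ^ n) (ρ a) x - x := by
  intro n _ c hc
  refine ⟨0, fun a ha => ?_⟩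
  have hca : c a = 0 := statement4_general ℚ_[p] ρ hV hc (hI a ha)
  rw [hca, Submodule.Quotient.mk_zero, map_zero, sub_zero]
end

section
/- Let p be a prime, V a finite-dimensional ℚ_p-vector space, and Γ → GL(V) a representation of a group Γ such that the ℚ_p-subalgebra of End_{ℚ_p}(V) generated by the image of Γ is all of End_{ℚ_p}(V) (i.e. V is absolutely irreducible). Let T ⊆ V be a Γ-stable lattice. Then there exists an integer c ≥ 0 such that: (a) every Γ-stable lattice L with L ⊆ T and L ⊄ pT contains p^c T, and in particular there are only finitely many such lattices; and (b) for every n ≥ 1, every Γ-stable submodule of T/pⁿT that is not contained in p·(T/pⁿT) contains p^c·(T/pⁿT). -/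
/-!
Let `R` be a discrete valuation ring with uniformizer `ϖ` and fraction field `K`. The `R`-algebra
generated by the image of `Γ` spans `End_K V` over `K`, so it contains `ϖ ^ c • End_R T` for some
`c`, as `End_R T` is finitely generated over `R`. A vector `x` of `T` outside `ϖ T` has a unit
coordinate, so any `y ∈ T` is the image of `x` under some endomorphism of `T`. Hence `ϖ ^ c • y`
lies in every `Γ`-stable submodule containing `x`. Finiteness follows as `T / ϖ ^ c T` is finite
when the residue field is.
-/

open Module IsLocalRing
open scoped Pointwise

theorem span_adjoin_eq_top_of_adjoin_eq_top {R K A : Type*} [CommSemiring R] [CommSemiring K]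
    [Semiring A] [Algebra R A] [Algebra K A] [SMul R K] [IsScalarTower R K A] {s : Set A}
    (hs : Algebra.adjoin K s = ⊤) : Submodule.span K (Algebra.adjoin R s : Set A) = ⊤ := by
  rw [← Subalgebra.coe_toSubmodule, Algebra.adjoin_eq_span, Submodule.span_span_of_tower,
    ← Algebra.adjoin_eq_span, hs, Algebra.top_toSubmodule]

theorem apply_mem_of_mem_adjoin {R K V : Type*} [CommSemiring R] [CommSemiring K] [Algebra R K]
    [AddCommMonoid V] [Module R V] [Module K V] [IsScalarTower R K V] {s : Set (End K V)}
    {S : Submodule R V} (hS : ∀ f ∈ s, ∀ x ∈ S, f x ∈ S) {f : End K V}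
    (hf : f ∈ Algebra.adjoin R s) {x : V} (hx : x ∈ S) : f x ∈ S := by
  induction hf using Algebra.adjoin_induction generalizing x with
  | mem _ hf => exact hS _ hf x hx
  | algebraMap r => exact S.smul_mem r hx
  | add _ _ _ _ hf hg => exact S.add_mem (hf hx) (hg hx)
  | mul _ _ _ _ hf hg => exact hf (hg hx)

section Localization

variable {R : Type*} [CommRing R] (M : Submonoid R) {K : Type*} [CommRing K] [Algebra R K]
  [IsLocalization M K]

theorem exists_smul_le_of_fg_of_subset_span {W : Type*} [AddCommGroup W] [Module R W] [Module K W]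
    [IsScalarTower R K W] {N P : Submodule R W} (hN : N.FG)
    (hNP : (N : Set W) ⊆ Submodule.span K (P : Set W)) : ∃ t : M, (t : R) • N ≤ P := by
  obtain ⟨n, v, rfl⟩ := Submodule.fg_iff_exists_fin_generating_family.1 hN
  have exists_smul_mem (i : Fin n) : ∃ t : M, (t : R) • v i ∈ P := by
    simpa only [Submodule.span_eq] using! multiple_mem_span_of_mem_localization_span M K _ (v i)
      (hNP (Submodule.subset_span ⟨i, rfl⟩))
  choose t ht using exists_smul_mem
  refine ⟨∏ i, t i, (Submodule.map_span_le _ _ _).2 <| Set.forall_mem_range.2 fun i => ?_⟩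
  obtain ⟨u, hu⟩ := Finset.dvd_prod_of_mem t (Finset.mem_univ i)
  rw [DistribSMul.toLinearMap_apply, hu, mul_comm, Submonoid.coe_mul, mul_smul]
  exact P.smul_mem u (ht i)

variable {V : Type*} [AddCommGroup V] [Module R V] [Module K V] [IsScalarTower R K V]

theorem isLocalizedModule_subtype_of_span_eq_top {T : Submodule R V}
    (hT : Submodule.span K (T : Set V) = ⊤) : IsLocalizedModule M T.subtype where
  map_units t := by
    have h := (IsLocalization.map_units K t).map (Module.toModuleEnd R (S := K) V)
    convert h
    ext x
    simp
  surj x := by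
    obtain ⟨t, ht⟩ := multiple_mem_span_of_mem_localization_span M K (T : Set V) x
      (hT ▸ Submodule.mem_top)
    rw [Submodule.span_eq] at ht
    exact ⟨(⟨t • x, ht⟩, t), rfl⟩
  exists_of_eq h := ⟨1, by rw [Subtype.ext h]⟩

theorem exists_smul_end_apply_mem [IsNoetherianRing R] {s : Set (End K V)}
    (hs : Algebra.adjoin K s = ⊤) (T : Submodule R V) [Submodule.IsLattice K T] :
    ∃ t : M, ∀ S : Submodule R V, (∀ f ∈ s, ∀ x ∈ S, f x ∈ S) →
      ∀ (e : End R T) (x : T), (x : V) ∈ S → (t : R) • (e x : V) ∈ S := by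
  have := isLocalizedModule_subtype_of_span_eq_top M
    (Submodule.IsLattice.span_eq_top (A := K) (M := T))
  let extend : End R T →ₗ[R] End K V :=
    IsLocalizedModule.mapExtendScalars M T.subtype T.subtype K
  have range_fg : (LinearMap.range extend).FG := Module.Finite.iff_fg.1 inferInstance
  obtain ⟨t, ht⟩ := exists_smul_le_of_fg_of_subset_span M (K := K)
    (P := Subalgebra.toSubmodule (Algebra.adjoin R s)) range_fg
    fun _ _ => span_adjoin_eq_top_of_adjoin_eq_top (R := R) hs ▸ Submodule.mem_top
  refine ⟨t, fun S hS e x hx => ?_⟩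
  have extend_apply : extend e x = e x := IsLocalizedModule.map_apply M T.subtype T.subtype e x
  rw [← extend_apply, ← LinearMap.smul_apply]
  exact apply_mem_of_mem_adjoin hS
    (ht (Submodule.smul_mem_pointwise_smul _ _ _ (LinearMap.mem_range_self extend e))) hx

end Localization

theorem exists_end_apply_eq_of_notMem_maximalIdeal_smul_top {R : Type*} [CommRing R] [IsLocalRing R]
    {N : Type*} [AddCommGroup N] [Module R N] [Module.Free R N] {x : N}
    (hx : x ∉ maximalIdeal R • (⊤ : Submodule R N)) (y : N) : ∃ e : End R N, e x = y := by
  let b := Module.Free.chooseBasis R N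
  obtain ⟨i, u, hu⟩ : ∃ i, IsUnit (b.repr x i) := by
    by_contra! h
    refine hx (b.linearCombination_repr x ▸ Submodule.sum_mem _ fun i _ => ?_)
    exact Submodule.smul_mem_smul ((mem_maximalIdeal _).2 (h i)) Submodule.mem_top
  refine ⟨(b.coord i).smulRight ((↑u⁻¹ : R) • y), ?_⟩
  rw [LinearMap.smulRight_apply, b.coord_apply, ← hu, smul_smul, Units.mul_inv, one_smul]

theorem finite_Icc_smul {R : Type*} [CommRing R] {I : Ideal R} [Finite (R ⧸ I)]
    {V : Type*} [AddCommGroup V] [Module R V] {T : Submodule R V} (hT : T.FG) :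
    (Set.Icc (I • T) T).Finite := by
  have : Finite (T ⧸ I • (⊤ : Submodule R T)) :=
    Submodule.finite_quotient_smul I (T.fg_top.2 hT)
  have : Finite (Set.Ici (I • (⊤ : Submodule R T))) :=
    .of_equiv _ (Submodule.comapMkQRelIso (I • (⊤ : Submodule R T))).toEquiv
  refine ((Set.toFinite (Set.Ici (I • (⊤ : Submodule R T)))).image
    (Submodule.map T.subtype)).subset fun L ⟨hIL, hLT⟩ => ?_
  refine ⟨L.submoduleOf T, fun x hx => hIL ((Submodule.mem_smul_top_iff I T x).1 hx), ?_⟩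
  rw [Submodule.submoduleOf, Submodule.map_comap_subtype, inf_eq_right.2 hLT]

section DiscreteValuationRing

variable {R : Type*} [CommRing R] [IsDomain R] [IsDiscreteValuationRing R]
  {K : Type*} [Field K] [Algebra R K] [IsFractionRing R K]
  {V : Type*} [AddCommGroup V] [Module R V] [Module K V] [IsScalarTower R K V]

theorem exists_pow_smul_le_of_not_le_smul {ϖ : R} (hϖ : Irreducible ϖ) {s : Set (End K V)}
    (hs : Algebra.adjoin K s = ⊤) (T : Submodule R V) [Submodule.IsLattice K T] :
    ∃ c : ℕ, ∀ S : Submodule R V, (∀ f ∈ s, ∀ x ∈ S, f x ∈ S) → S ≤ T → ¬ S ≤ ϖ • T →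
      ϖ ^ c • T ≤ S := by
  obtain ⟨⟨t, ht⟩, htS⟩ := exists_smul_end_apply_mem (nonZeroDivisors R) hs T
  obtain ⟨c, u, hu⟩ :=
    IsDiscreteValuationRing.associated_pow_irreducible (nonZeroDivisors.ne_zero ht) hϖ
  refine ⟨c, fun S hS hST hSϖ => ?_⟩
  obtain ⟨x, hxS, hxϖ⟩ := SetLike.not_le_iff_exists.1 hSϖ
  rintro _ ⟨y, hy, rfl⟩
  have := Submodule.IsLattice.free K T
  obtain ⟨e, he⟩ := exists_end_apply_eq_of_notMem_maximalIdeal_smul_top (x := ⟨x, hST hxS⟩)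
    (by rwa [Submodule.mem_smul_top_iff, hϖ.maximalIdeal_eq, Submodule.ideal_span_singleton_smul])
    (⟨y, hy⟩ : T)
  have hty : t • y ∈ S := by simpa only [he] using htS S hS e ⟨x, hST hxS⟩ hxS
  rw [DistribSMul.toLinearMap_apply, ← hu, mul_comm, mul_smul]
  exact S.smul_mem _ hty

theorem statement5_general [Finite (ResidueField R)] {ϖ : R} (hϖ : Irreducible ϖ)
    {s : Set (End K V)} (hs : Algebra.adjoin K s = ⊤) (T : Submodule R V)
    [Submodule.IsLattice K T] :
    ∃ c : ℕ,
      (∀ S : Submodule R V, (∀ f ∈ s, ∀ x ∈ S, f x ∈ S) → S ≤ T → ¬ S ≤ ϖ • T → ϖ ^ c • T ≤ S) ∧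
      {S : Submodule R V | (∀ f ∈ s, ∀ x ∈ S, f x ∈ S) ∧ S ≤ T ∧ ¬ S ≤ ϖ • T}.Finite := by
  obtain ⟨c, hc⟩ := exists_pow_smul_le_of_not_le_smul hϖ hs T
  have : Finite (R ⧸ maximalIdeal R) := inferInstanceAs (Finite (ResidueField R))
  have : Finite (R ⧸ Ideal.span {ϖ ^ c}) := by
    rw [← Ideal.span_singleton_pow, ← hϖ.maximalIdeal_eq]
    exact Ideal.finite_quotient_pow (IsNoetherian.noetherian _) c
  have hfin : (Set.Icc (Ideal.span {ϖ ^ c} • T) T).Finite :=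
    finite_Icc_smul (Submodule.IsLattice.fg (A := K))
  rw [Submodule.ideal_span_singleton_smul] at hfin
  exact ⟨c, hc, hfin.subset fun S ⟨hS, hST, hSϖ⟩ => ⟨hc S hS hST hSϖ, hST⟩⟩

end DiscreteValuationRing

/-- Let `V` be a finite-dimensional `ℚ_p`-vector space with an absolutely
irreducible action of a group `Γ` (the `ℚ_p`-subalgebra of `End(V)` generated by the image
of `Γ` is everything), and let `T ⊆ V` be a `Γ`-stable lattice.  Then there is `c ≥ 0` such
that: (a) every `Γ`-stable lattice `L ⊆ T` with `L ⊄ pT` contains `p^c T`, and in particular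
there are only finitely many such lattices; and (b) for every `n ≥ 1`, every `Γ`-stable
submodule of `T/pⁿT` not contained in `p(T/pⁿT)` contains `p^c (T/pⁿT)` (formulated via the
correspondence with `Γ`-stable intermediate submodules `pⁿT ⊆ S' ⊆ T`). -/
theorem statement5 (p : ℕ) [Fact p.Prime]
    {Γ : Type*} [Group Γ]
    {V : Type*} [AddCommGroup V] [Module ℚ_[p] V] [FiniteDimensional ℚ_[p] V]
    [Module ℤ_[p] V] [IsScalarTower ℤ_[p] ℚ_[p] V]
    (ρ : Γ →* Module.End ℚ_[p] V)
    (hirr : Algebra.adjoin ℚ_[p] (Set.range fun g : Γ => (ρ g : Module.End ℚ_[p] V)) = ⊤)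
    (T : Submodule ℤ_[p] V) (hTfg : T.FG)
    (hTspan : Submodule.span ℚ_[p] (T : Set V) = ⊤)
    (hTstab : ∀ g : Γ, ∀ x ∈ T, ρ g x ∈ T) :
    ∃ c : ℕ,
      (∀ L : Submodule ℤ_[p] V, L.FG → Submodule.span ℚ_[p] (L : Set V) = ⊤ →
        (∀ g : Γ, ∀ x ∈ L, ρ g x ∈ L) → L ≤ T →
        ¬ L ≤ T.map ((p : ℤ_[p]) • (LinearMap.id : V →ₗ[ℤ_[p]] V)) →
        T.map (((p : ℤ_[p]) ^ c) • (LinearMap.id : V →ₗ[ℤ_[p]] V)) ≤ L) ∧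
      {L : Submodule ℤ_[p] V | L.FG ∧ Submodule.span ℚ_[p] (L : Set V) = ⊤ ∧
        (∀ g : Γ, ∀ x ∈ L, ρ g x ∈ L) ∧ L ≤ T ∧
        ¬ L ≤ T.map ((p : ℤ_[p]) • (LinearMap.id : V →ₗ[ℤ_[p]] V))}.Finite ∧
      (∀ n : ℕ, 1 ≤ n → ∀ S' : Submodule ℤ_[p] V,
        (∀ g : Γ, ∀ x ∈ S', ρ g x ∈ S') →
        T.map (((p : ℤ_[p]) ^ n) • (LinearMap.id : V →ₗ[ℤ_[p]] V)) ≤ S' → S' ≤ T →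
        ¬ S' ≤ T.map ((p : ℤ_[p]) • (LinearMap.id : V →ₗ[ℤ_[p]] V)) →
        T.map (((p : ℤ_[p]) ^ c) • (LinearMap.id : V →ₗ[ℤ_[p]] V)) ≤ S') := by
  have : Submodule.IsLattice ℚ_[p] T := ⟨hTfg, hTspan⟩
  obtain ⟨c, hc, hfin⟩ := statement5_general (R := ℤ_[p]) PadicInt.irreducible_p hirr T
  simp only [Set.forall_mem_range] at hc hfin
  exact ⟨c, fun L _ _ => hc L, hfin.subset fun L hL => hL.2.2, fun _ _ S hS _ => hc S hS⟩
end

section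
/- Let p be a prime, Γ a group, and T a Γ-module that is finite free as a ℤ_p-module, such that End_{ℤ_p[Γ]}(T) = ℤ_p·id and such that the torsion subgroup of Ext¹_{ℤ_p[Γ]}(T, T) is annihilated by p^e for some integer e ≥ 0. Then for every integer n ≥ 1, the quotient of End_{ℤ/pⁿ[Γ]}(T/pⁿT) by the submodule of scalar endomorphisms (ℤ/pⁿ)·id is annihilated by p^e. -/
/-- `Ext¹_{ℤ_p[Γ]}(T,T)`, computed in the abelian category of modules over the group ring
`ℤ_p[Γ]`, with `T` regarded as a `ℤ_p[Γ]`-module via the representation `ρ`. -/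
noncomputable def ExtOne (p : ℕ) [Fact p.Prime] (Γ : Type) [Group Γ]
    (T : Type) [AddCommGroup T] [Module ℤ_[p] T] (ρ : Representation ℤ_[p] Γ T) :=
  ((Ext ℤ (ModuleCat (MonoidAlgebra ℤ_[p] Γ)) 1).obj
      (Opposite.op (ModuleCat.of (MonoidAlgebra ℤ_[p] Γ) ρ.asModule))).obj
    (ModuleCat.of (MonoidAlgebra ℤ_[p] Γ) ρ.asModule)

/- Multiplication by `a` on `T` gives a short exact sequence `0 ⟶ T ⟶ T ⟶ T/aT ⟶ 0`, so the
obstruction to lifting an equivariant map `T ⟶ T/aT` along the projection is a class in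
`Ext¹(T, T)` which is killed by `a`, hence by `b`. Applied to the map induced by an equivariant
endomorphism `ψ` of `T/aT`, this shows that `b • ψ` lifts to an equivariant endomorphism of `T`,
which is a scalar. -/

open CategoryTheory

universe u v w t

section Ext

variable {C : Type u} [Category.{v} C] [Abelian C] [HasExt.{w} C]

section Cocycles

variable {R : Type t} [Ring R] [Linear R C] {X : C}

theorem smul_extMk {Y : C} (P : ProjectiveResolution X) {n m : ℕ} (r : R) (f : P.complex.X n ⟶ Y)
    (hm : n + 1 = m) (hf : P.complex.d m n ≫ f = 0) :
    r • P.extMk f m hm hf = P.extMk (r • f) m hm (by simp [hf]) := by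
  simp [Abelian.Ext.smul_eq_comp_mk₀, P.extMk_comp_mk₀]

variable (R) (P : ProjectiveResolution X) (Y : C) (n : ℕ)

/-- The class in `Ext X Y (n + 1)` of a cocycle `Pₙ₊₁ ⟶ Y` on a projective resolution `P` of `X`,
as a linear map. -/
noncomputable def extOfCocycle :
    LinearMap.ker ((P.complex.linearYonedaObj R Y).sc' n (n + 1) (n + 2)).g.hom →ₗ[R]
      Abelian.Ext X Y (n + 1) where
  toFun f := P.extMk f.1 (n + 2) rfl f.2
  map_add' f g := (P.add_extMk f.1 g.1 (n + 2) rfl f.2 g.2).symm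
  map_smul' r f := (smul_extMk P r f.1 rfl f.2).symm

theorem extOfCocycle_surjective : Function.Surjective (extOfCocycle R P Y n) := fun x ↦ by
  obtain ⟨f, hf, rfl⟩ := P.extMk_surjective x (n + 2) rfl
  exact ⟨⟨f, hf⟩, rfl⟩

theorem ker_extOfCocycle :
    LinearMap.ker (extOfCocycle R P Y n) = LinearMap.range
      ((P.complex.linearYonedaObj R Y).sc' n (n + 1) (n + 2)).moduleCatToCycles := by
  ext f
  exact (P.extMk_eq_zero_iff f.1 (n + 2) rfl f.2 n rfl).trans
    (exists_congr fun _ ↦ ⟨fun h ↦ Subtype.ext h, congrArg Subtype.val⟩)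

end Cocycles

/-- In positive degrees, the derived functor `CategoryTheory.Ext` agrees with `Abelian.Ext`, the
`Hom` groups of the derived category: both are cocycles on a projective resolution modulo
coboundaries. -/
noncomputable def extSuccLinearEquiv [EnoughProjectives C] (R : Type t) [Ring R] [Linear R C]
    (X Y : C) (n : ℕ) :
    ((Ext R C (n + 1)).obj (Opposite.op X)).obj Y ≃ₗ[R] Abelian.Ext X Y (n + 1) :=
  let P := projectiveResolution X
  let K := P.complex.linearYonedaObj R Y
  (P.isoExt (n + 1) Y ≪≫ K.homologyIsoSc' n (n + 1) (n + 2) (by simp) (by simp) ≪≫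
    (K.sc' n (n + 1) (n + 2)).moduleCatHomologyIso).toLinearEquiv ≪≫ₗ
  Submodule.quotEquivOfEq _ _ (ker_extOfCocycle R P Y n).symm ≪≫ₗ
  LinearMap.quotKerEquivOfSurjective _ (extOfCocycle_surjective R P Y n)

/-- The connecting homomorphism `Hom(X, S.X₃) → Ext¹(X, S.X₁)` of a short exact sequence `S`. -/
noncomputable def connectingHom {S : ShortComplex C} (hS : S.ShortExact) (X : C) :
    (X ⟶ S.X₃) →+ Abelian.Ext X S.X₁ 1 :=
  (hS.extClass.postcomp X (zero_add 1)).comp Abelian.Ext.addEquiv₀.symm.toAddMonoidHom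

section ConnectingHom

variable {S : ShortComplex C} (hS : S.ShortExact) {X : C}

theorem connectingHom_eq_zero_iff {ψ : X ⟶ S.X₃} :
    connectingHom hS X ψ = 0 ↔ ∃ φ : X ⟶ S.X₂, φ ≫ S.g = ψ := by
  constructor
  · intro h
    obtain ⟨x, hx⟩ := Abelian.Ext.covariant_sequence_exact₃ X hS _ (zero_add 1) h
    obtain ⟨φ, rfl⟩ := (Abelian.Ext.mk₀_bijective _ _).surjective x
    refine ⟨φ, (Abelian.Ext.mk₀_bijective _ _).injective ?_⟩
    simpa using hx
  · rintro ⟨φ, rfl⟩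
    simp [connectingHom, ← Abelian.Ext.mk₀_comp_mk₀]

theorem connectingHom_comp_f (ψ : X ⟶ S.X₃) :
    (connectingHom hS X ψ).comp (Abelian.Ext.mk₀ S.f) (add_zero 1) = 0 := by
  simp [connectingHom]

end ConnectingHom

theorem ext_comp_mk₀_nsmul_id {X Y : C} {n : ℕ} (x : Abelian.Ext X Y n) (a : ℕ) :
    x.comp (Abelian.Ext.mk₀ (a • 𝟙 Y)) (add_zero n) = a • x := by
  simpa using map_nsmul ((Abelian.Ext.bilinearComp X Y Y n 0 n (add_zero n) x).comp
    Abelian.Ext.addEquiv₀.symm.toAddMonoidHom) a (𝟙 Y)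

theorem exists_comp_eq_nsmul_of_ext {X Y Q : C} {a b : ℕ} {π : Y ⟶ Q} {hπ : (a • 𝟙 Y) ≫ π = 0}
    (hS : (ShortComplex.mk (a • 𝟙 Y) π hπ).ShortExact)
    (hExt : ∀ x : Abelian.Ext X Y 1, a • x = 0 → b • x = 0) (ψ : X ⟶ Q) :
    ∃ φ : X ⟶ Y, φ ≫ π = b • ψ := by
  rw [← connectingHom_eq_zero_iff hS, map_nsmul]
  exact hExt _ ((ext_comp_mk₀_nsmul_id _ _).symm.trans (connectingHom_comp_f hS ψ))

end Ext

theorem exists_linearMap_comp_eq_nsmul_of_ext {A : Type u} [Ring A] [Small.{v} A] {X M N : Type v}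
    [AddCommGroup X] [Module A X] [AddCommGroup M] [Module A M] [AddCommGroup N] [Module A N]
    {a b : ℕ}
    (hExt : ∀ x : Abelian.Ext (ModuleCat.of A X) (ModuleCat.of A M) 1, a • x = 0 → b • x = 0)
    {π : M →ₗ[A] N} (hinj : Function.Injective fun m : M ↦ a • m)
    (hexact : Function.Exact (fun m : M ↦ a • m) π) (hsurj : Function.Surjective π)
    (ψ : X →ₗ[A] N) : ∃ φ : X →ₗ[A] M, π ∘ₗ φ = b • ψ := by
  let f : ModuleCat.of A M ⟶ ModuleCat.of A M := a • 𝟙 _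
  have hf : ⇑f = fun m : M ↦ a • m := by
    ext m
    simp [f]
  have hfπ : f ≫ ModuleCat.ofHom π = 0 := by
    ext m
    exact (congrArg π (congrFun hf m)).trans (hexact.apply_apply_eq_zero m)
  have hS : (ShortComplex.mk f (ModuleCat.ofHom π) hfπ).ShortExact :=
    ModuleCat.shortComplex_shortExact _ (by exact hf ▸ hexact) (by exact hf ▸ hinj) hsurj
  obtain ⟨φ, hφ⟩ := exists_comp_eq_nsmul_of_ext hS hExt (ModuleCat.ofHom ψ)
  refine ⟨φ.hom, ?_⟩
  ext x
  simpa using congr($hφ x)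

section Representation

variable {k G V : Type*} [CommRing k] [Monoid G] [AddCommGroup V] [Module k V]
  (ρ : Representation k G V) (a : k)

/-- The representation on `V/aV` induced by a representation on `V`. -/
def quotSMulTopRep : Representation k G (V ⧸ smulTop a V) where
  toFun g := quotEnd a (ρ g)
  map_one' := by ext; simp [quotEnd]
  map_mul' g h := by ext; simp [quotEnd]

/-- The projection from `V` to `V/aV`, as a map of representations. -/
def quotSMulTopMk : Representation.IntertwiningMap ρ (quotSMulTopRep ρ a) :=
  ⟨(smulTop a V).mkQ, fun _ ↦ rfl⟩

theorem quotSMulTopMk_surjective : Function.Surjective (quotSMulTopMk ρ a) :=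
  (smulTop a V).mkQ_surjective

theorem exact_quotSMulTopMk : Function.Exact (fun v : V ↦ a • v) (quotSMulTopMk ρ a) :=
  fun _ ↦ Submodule.Quotient.mk_eq_zero (smulTop a V)

end Representation

theorem exists_quotEnd_eq_smul_of_ext {k : Type u} {G : Type v} {V : Type w} [CommRing k]
    [Monoid G] [Small.{w} (MonoidAlgebra k G)] [AddCommGroup V] [Module k V]
    (ρ : Representation k G V) {a b : ℕ} (ha : IsSMulRegular V (a : k))
    (hExt : ∀ x : Abelian.Ext (ModuleCat.of (MonoidAlgebra k G) ρ.asModule)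
      (ModuleCat.of (MonoidAlgebra k G) ρ.asModule) 1, a • x = 0 → b • x = 0)
    (ψ : Representation.IntertwiningMap (quotSMulTopRep ρ (a : k)) (quotSMulTopRep ρ (a : k))) :
    ∃ φ : Representation.IntertwiningMap ρ ρ,
      quotEnd (a : k) φ.toLinearMap = (b : k) • ψ.toLinearMap := by
  let E := Representation.IntertwiningMap.equivLinearMapAsModule ρ (quotSMulTopRep ρ (a : k))
  have hnsmul : (fun v : V ↦ a • v) = fun v ↦ (a : k) • v := by
    ext v
    rw [Nat.cast_smul_eq_nsmul]
  have hinj : Function.Injective fun v : V ↦ a • v := hnsmul ▸ ha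
  have hexact : Function.Exact (fun v : V ↦ a • v) (quotSMulTopMk ρ (a : k)) :=
    hnsmul ▸ exact_quotSMulTopMk ρ (a : k)
  obtain ⟨φ, hφ⟩ := exists_linearMap_comp_eq_nsmul_of_ext hExt (π := E (quotSMulTopMk ρ (a : k)))
    hinj hexact (quotSMulTopMk_surjective ρ (a : k)) (E (ψ.comp (quotSMulTopMk ρ (a : k))))
  refine ⟨(Representation.IntertwiningMap.equivLinearMapAsModule ρ ρ).symm φ, ?_⟩
  rw [Nat.cast_smul_eq_nsmul]
  ext v
  exact congr($hφ v)

theorem statement6_general {k : Type u} {G : Type v} {V : Type w} [CommRing k]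
    [Monoid G] [Small.{w} (MonoidAlgebra k G)] [AddCommGroup V] [Module k V]
    (ρ : Representation k G V)
    (hEnd : ∀ φ : V →ₗ[k] V, (∀ g : G, φ ∘ₗ ρ g = ρ g ∘ₗ φ) → ∃ c : k, φ = c • LinearMap.id)
    {a b : ℕ} (ha : IsSMulRegular V (a : k))
    (hExt : ∀ x : ((Ext ℤ (ModuleCat (MonoidAlgebra k G)) 1).obj
        (Opposite.op (ModuleCat.of (MonoidAlgebra k G) ρ.asModule))).obj
          (ModuleCat.of (MonoidAlgebra k G) ρ.asModule), a • x = 0 → b • x = 0)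
    (ψ : Module.End k (V ⧸ smulTop (a : k) V))
    (hψ : ∀ g : G, ψ ∘ₗ quotEnd (a : k) (ρ g) = quotEnd (a : k) (ρ g) ∘ₗ ψ) :
    ∃ c : k, (b : k) • ψ =
      c • (LinearMap.id : V ⧸ smulTop (a : k) V →ₗ[k] V ⧸ smulTop (a : k) V) := by
  let M := ModuleCat.of (MonoidAlgebra k G) ρ.asModule
  let extEquiv := extSuccLinearEquiv ℤ M M 0
  have hExt' (x : Abelian.Ext M M 1) (hx : a • x = 0) : b • x = 0 := by
    rw [← map_eq_zero_iff extEquiv.symm extEquiv.symm.injective, map_nsmul] at hx ⊢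
    exact hExt _ hx
  obtain ⟨φ, hφ⟩ := exists_quotEnd_eq_smul_of_ext ρ ha hExt' ⟨ψ, hψ⟩
  obtain ⟨c, hc⟩ := hEnd φ.toLinearMap φ.isIntertwining'
  refine ⟨c, ?_⟩
  rw [← hφ, hc]
  ext v
  simp [quotEnd]

/-- Let `p` be a prime, `Γ` a group, and `T` a `Γ`-module which is finite free
over `ℤ_p`, such that `End_{ℤ_p[Γ]}(T) = ℤ_p·id` and the torsion subgroup of
`Ext¹_{ℤ_p[Γ]}(T,T)` is annihilated by `p^e`.  Then for every `n ≥ 1`, the quotient of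
`End_{ℤ/pⁿ[Γ]}(T/pⁿT)` by the scalar endomorphisms is annihilated by `p^e`. -/
theorem statement6 (p : ℕ) [Fact p.Prime]
    {Γ : Type} [Group Γ]
    {T : Type} [AddCommGroup T] [Module ℤ_[p] T]
    [Module.Finite ℤ_[p] T] [Module.Free ℤ_[p] T]
    (ρ : Representation ℤ_[p] Γ T)
    (hEnd : ∀ φ : T →ₗ[ℤ_[p]] T, (∀ g : Γ, φ ∘ₗ ρ g = ρ g ∘ₗ φ) →
      ∃ c : ℤ_[p], φ = c • LinearMap.id)
    (e : ℕ)
    (hExt : ∀ x : ExtOne p Γ T ρ, (∃ m : ℕ, m ≠ 0 ∧ m • x = 0) → (p ^ e : ℕ) • x = 0) :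
    ∀ n : ℕ, 1 ≤ n →
      ∀ ψ : Module.End ℤ_[p] (T ⧸ smulTop ((p : ℤ_[p]) ^ n) T),
        (∀ g : Γ, ψ ∘ₗ quotEnd ((p : ℤ_[p]) ^ n) (ρ g) = quotEnd ((p : ℤ_[p]) ^ n) (ρ g) ∘ₗ ψ) →
        ∃ c : ℤ_[p], (p : ℤ_[p]) ^ e • ψ = c • (LinearMap.id :
          T ⧸ smulTop ((p : ℤ_[p]) ^ n) T →ₗ[ℤ_[p]] T ⧸ smulTop ((p : ℤ_[p]) ^ n) T) := by
  intro n _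
  rw [← Nat.cast_pow, ← Nat.cast_pow]
  exact statement6_general ρ hEnd (smul_right_injective T (NeZero.ne _))
    fun x hx ↦ hExt x ⟨p ^ n, NeZero.ne _, hx⟩
end

section
/- Let p be an odd prime, Γ a group, V a finite-dimensional ℚ_p-vector space with a Γ-action such that the ℚ_p-subalgebra of End_{ℚ_p}(V) generated by the image of Γ equals End_{ℚ_p}(V) (i.e. V is absolutely irreducible), and let T ⊆ V be a Γ-stable lattice. Assume that the torsion subgroup of Ext¹_{ℤ_p[Γ]}(T, T) has finite exponent. Then there exists an integer 𝔫(T) ≥ 0, depending only on T, such that for every integer n ≥ 1 the Γ-module T/pⁿT has reducibility depth at most 𝔫(T). -/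
/-!
The image of `Γ` is closed under products, so it spans `End V` over `ℚ_p`. Clearing denominators,
the `ℤ_p`-span `A` of `Γ` in `End T` has torsion quotient, and as `End T` is finitely generated
there is one `k` with `pᵏ End T ⊆ A`. This `k` bounds the reducibility depth of every `T/aT`:

* an element outside `p(T/aT)` is carried to any given element by an operator induced from
  `End T`, so a stable submodule containing it contains `pᵏ(T/aT)`;
* an endomorphism `ψ` of `T/(a, pᵐ)T` commuting with `Γ` commutes with `A`, so `pᵏψ` commutes with
  everything induced from `End T`, in particular with the operators of rank one, and is a scalar.
-/

section QuotEnd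

variable {R M : Type*} [CommRing R] [AddCommGroup M] [Module R M]

theorem smul_mem_smulTop (a : R) (x : M) : a • x ∈ smulTop a M := ⟨x, rfl⟩

theorem mkQ_mem_smulTop {a b : R} {x : M} (hx : x ∈ smulTop b M) :
    (smulTop a M).mkQ x ∈ smulTop b (M ⧸ smulTop a M) := by
  obtain ⟨y, rfl⟩ := hx
  exact smul_mem_smulTop b ((smulTop a M).mkQ y)

/-- `quotEnd a` as a linear map, which transports `R`-linear spans of operators from `M` to
`M/aM`. -/
def quotEndₗ (a : R) (M : Type*) [AddCommGroup M] [Module R M] :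
    Module.End R M →ₗ[R] Module.End R (M ⧸ smulTop a M) where
  toFun := quotEnd a
  map_add' _ _ := Submodule.linearMap_qext _ rfl
  map_smul' _ _ := Submodule.linearMap_qext _ rfl

theorem quotEnd_mem_span {G : Type*} {act : G → Module.End R M} (a : R) {F : Module.End R M}
    (hF : F ∈ Submodule.span R (Set.range act)) :
    quotEnd a F ∈ Submodule.span R (Set.range fun g => quotEnd a (act g)) := by
  have hmap := Submodule.mem_map_of_mem (f := quotEndₗ a M) hF
  rwa [Submodule.map_span, ← Set.range_comp] at hmap

end QuotEnd

theorem apply_mem_of_mem_span {R M G : Type*} [CommSemiring R] [AddCommMonoid M] [Module R M]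
    {act : G → Module.End R M} {N : Submodule R M} (hN : ∀ g, ∀ x ∈ N, act g x ∈ N)
    {F : Module.End R M} (hF : F ∈ Submodule.span R (Set.range act)) {x : M} (hx : x ∈ N) :
    F x ∈ N := by
  have hle : Submodule.span R (Set.range act) ≤ N.compatibleMaps N :=
    Submodule.span_le.mpr (Set.range_subset_iff.mpr hN)
  exact hle hF hx

theorem commute_of_mem_span {R B : Type*} [CommSemiring R] [Semiring B] [Algebra R B] {s : Set B}
    {a b : B} (ha : ∀ c ∈ s, Commute a c) (hb : b ∈ Submodule.span R s) : Commute a b := by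
  have hle : Submodule.span R s ≤ (Subalgebra.centralizer R {a}).toSubmodule :=
    Submodule.span_le.mpr fun c hc =>
      (Subalgebra.mem_centralizer_iff R).mpr <| by rintro _ rfl; exact ha c hc
  exact (Subalgebra.mem_centralizer_iff R).mp (hle hb) a rfl

section FreeModule

variable {R T : Type*} [CommRing R] [AddCommGroup T] [Module R T] [Module.Free R T]

theorem exists_dual_eq_one_of_notMem_smulTop [IsLocalRing R] {π : R}
    (hπ : IsLocalRing.maximalIdeal R = Ideal.span {π}) {t : T} (ht : t ∉ smulTop π T) :
    ∃ f : Module.Dual R T, f t = 1 := by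
  let b := Module.Free.chooseBasis R T
  obtain ⟨i, hi⟩ : ∃ i, ¬ π ∣ b.repr t i := by
    by_contra! hdvd
    refine ht ?_
    rw [← b.linearCombination_repr t, Finsupp.linearCombination_apply]
    refine Submodule.sum_mem _ fun i _ => ?_
    obtain ⟨c, hc⟩ := hdvd i
    simp only [hc, mul_smul]
    exact smul_mem_smulTop π (c • b i)
  obtain ⟨u, hu⟩ : IsUnit (b.repr t i) := by
    rwa [← Ideal.mem_span_singleton, ← hπ, IsLocalRing.mem_maximalIdeal, mem_nonunits_iff,
      not_not] at hi
  exact ⟨(↑u⁻¹ : R) • b.coord i, by simp [← hu]⟩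

theorem exists_eq_smul_id_of_commute {Q : Type*} [AddCommGroup Q] [Module R Q] {q : T →ₗ[R] Q}
    (hq : Function.Surjective q) {Φ : Module.End R T → Module.End R Q}
    (hΦ : ∀ E t, Φ E (q t) = q (E t)) {ψ : Module.End R Q} (hψ : ∀ E, Commute ψ (Φ E)) :
    ∃ c : R, ψ = c • LinearMap.id := by
  rcases subsingleton_or_nontrivial T with _ | _
  · have := hq.subsingleton
    exact ⟨0, Subsingleton.elim _ _⟩
  let b := Module.Free.chooseBasis R T
  obtain ⟨i⟩ := b.index_nonempty
  obtain ⟨t, ht⟩ := hq (ψ (q (b i)))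
  refine ⟨b.coord i t, LinearMap.cancel_right hq |>.mp <| LinearMap.ext fun y => ?_⟩
  let E : Module.End R T := (b.coord i).smulRight y
  calc ψ (q y) = ψ (Φ E (q (b i))) := by simp [hΦ, E]
    _ = Φ E (ψ (q (b i))) := LinearMap.congr_fun (hψ E) _
    _ = b.coord i t • q y := by rw [← ht, hΦ, LinearMap.smulRight_apply, map_smul]

end FreeModule

theorem ReducibilityCond.exists_hasReducibilityDepth_le {R M G : Type*} [CommRing R]
    [AddCommGroup M] [Module R M] {π : R} {act : G → Module.End R M} {k : ℕ}
    (h : ReducibilityCond π act k) : ∃ d ≤ k, HasReducibilityDepth π act d := by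
  classical
  have hex : ∃ d, ReducibilityCond π act d := ⟨k, h⟩
  exact ⟨Nat.find hex, Nat.find_min' hex h, Nat.find_spec hex, fun _ => Nat.find_min' hex⟩

section ReducibilityConditions

variable {R T G : Type*} [CommRing R] [AddCommGroup T] [Module R T] [Module.Free R T]
  {r : R} {act : G → Module.End R T}

theorem smulTop_le_of_stable [IsLocalRing R] {π : R}
    (hπ : IsLocalRing.maximalIdeal R = Ideal.span {π})
    (hr : ∀ E : Module.End R T, r • E ∈ Submodule.span R (Set.range act)) {a : R}
    {N : Submodule R (T ⧸ smulTop a T)} (hN : ∀ g, ∀ x ∈ N, quotEnd a (act g) x ∈ N)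
    (hNπ : ¬ N ≤ smulTop π (T ⧸ smulTop a T)) : smulTop r (T ⧸ smulTop a T) ≤ N := by
  obtain ⟨x, hxN, hx⟩ := SetLike.not_le_iff_exists.mp hNπ
  obtain ⟨t, rfl⟩ := Submodule.mkQ_surjective _ x
  obtain ⟨f, hf⟩ := exists_dual_eq_one_of_notMem_smulTop hπ (mt mkQ_mem_smulTop hx)
  rintro _ ⟨y, rfl⟩
  obtain ⟨s, rfl⟩ := Submodule.mkQ_surjective _ y
  have hmem := apply_mem_of_mem_span hN (quotEnd_mem_span a (hr (f.smulRight s))) hxN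
  simpa [quotEnd, hf] using hmem

theorem exists_smul_eq_smul_id_of_commute
    (hr : ∀ E : Module.End R T, r • E ∈ Submodule.span R (Set.range act)) {a b : R}
    {ψ : Module.End R ((T ⧸ smulTop a T) ⧸ smulTop b (T ⧸ smulTop a T))}
    (hψ : ∀ g, Commute ψ (quotEnd b (quotEnd a (act g)))) :
    ∃ c : R, r • ψ = c • LinearMap.id := by
  let Φ := quotEndₗ b (T ⧸ smulTop a T) ∘ₗ quotEndₗ a T
  have hcomm (E : Module.End R T) : Commute (r • ψ) (Φ E) := by
    have h : Commute ψ (Φ (r • E)) :=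
      commute_of_mem_span (Set.forall_mem_range.mpr hψ)
        (quotEnd_mem_span b (quotEnd_mem_span a (hr E)))
    rw [map_smul] at h
    calc r • ψ * Φ E = ψ * (r • Φ E) := by rw [smul_mul_assoc, mul_smul_comm]
      _ = r • Φ E * ψ := h.eq
      _ = Φ E * (r • ψ) := by rw [smul_mul_assoc, mul_smul_comm]
  exact exists_eq_smul_id_of_commute
    (q := (smulTop b (T ⧸ smulTop a T)).mkQ ∘ₗ (smulTop a T).mkQ)
    ((Submodule.mkQ_surjective _).comp (Submodule.mkQ_surjective _)) (fun _ _ => rfl) hcomm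

theorem reducibilityCond_quotEnd [IsLocalRing R] {π : R}
    (hπ : IsLocalRing.maximalIdeal R = Ideal.span {π}) {k : ℕ}
    (hk : ∀ E : Module.End R T, π ^ k • E ∈ Submodule.span R (Set.range act)) (a : R) :
    ReducibilityCond π (fun g => quotEnd a (act g)) k :=
  ⟨fun _ hN hNπ => smulTop_le_of_stable hπ hk hN hNπ,
    fun _ _ _ hψ => exists_smul_eq_smul_id_of_commute hk hψ⟩

end ReducibilityConditions

theorem span_range_eq_top_of_adjoin_eq_top {K B G : Type*} [CommSemiring K] [Semiring B]
    [Algebra K B] [Monoid G] (ρ : G →* B) (h : Algebra.adjoin K (Set.range ρ) = ⊤) :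
    Submodule.span K (Set.range ρ) = ⊤ := by
  have hclosure : (Submonoid.closure (Set.range ρ) : Set B) = Set.range ρ := by
    rw [← MonoidHom.coe_mrange, Submonoid.closure_eq]
  rw [← hclosure, ← Algebra.adjoin_eq_span, h, Algebra.top_toSubmodule]

theorem exists_pow_smul_eq_zero_of_isTorsion {R M : Type*} [CommRing R] [IsDomain R]
    [IsDiscreteValuationRing R] [AddCommGroup M] [Module R M] [Module.Finite R M] {π : R}
    (hπ : Irreducible π) (hM : Module.IsTorsion R M) : ∃ k : ℕ, ∀ x : M, π ^ k • x = 0 := by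
  obtain ⟨r, hr, hr0⟩ := Submodule.annihilator_top_inter_nonZeroDivisors hM
  obtain ⟨k, hk⟩ := IsDiscreteValuationRing.associated_pow_irreducible
    (nonZeroDivisors.ne_zero hr0) hπ
  refine ⟨k, fun x => ?_⟩
  have hann : π ^ k ∈ (⊤ : Submodule R M).annihilator := Ideal.mem_of_dvd _ hk.dvd hr
  exact Submodule.mem_annihilator.mp hann x Submodule.mem_top

section Lattice

variable {R : Type*} (A : Type*) {V G : Type*} [CommRing R] (S : Submonoid R) [CommRing A]
  [Algebra R A] [IsLocalization S A] [AddCommGroup V] [Module R V] [Module A V]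
  [IsScalarTower R A V] {T : Submodule R V}

theorem isLocalizedModule_subtype (hT : Submodule.span A (T : Set V) = ⊤) :
    IsLocalizedModule S T.subtype where
  map_units s := by
    simpa only [AlgHom.commutes] using (IsLocalization.map_units A s).map (Algebra.lsmul R R V)
  surj v := by
    obtain ⟨s, hs⟩ := multiple_mem_span_of_mem_localization_span S A (T : Set V) v
      (hT ▸ Submodule.mem_top)
    rw [Submodule.span_eq] at hs
    exact ⟨(⟨s • v, hs⟩, s), rfl⟩
  exists_of_eq h := ⟨1, congrArg _ (Subtype.ext h)⟩

theorem exists_smul_mem_span_of_span_eq_top (hT : Submodule.span A (T : Set V) = ⊤)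
    {act : G → Module.End A V} (hact : Submodule.span A (Set.range act) = ⊤)
    {actT : G → Module.End R T} (hcompat : ∀ g (x : T), (actT g x : V) = act g x)
    (E : Module.End R T) : ∃ s : S, s • E ∈ Submodule.span R (Set.range actT) := by
  have := isLocalizedModule_subtype A S hT
  let ext := IsLocalizedModule.mapExtendScalars S T.subtype T.subtype A
  have ext_apply (F : Module.End R T) (x : T) : ext F x = F x :=
    IsLocalizedModule.map_apply S T.subtype T.subtype F x
  have ext_injective : Function.Injective ext := fun F F' h =>
    LinearMap.ext fun x => Subtype.ext <| by rw [← ext_apply, h, ext_apply]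
  have ext_act (g : G) : ext (actT g) = act g :=
    LinearMap.ext_on hT fun x hx => (ext_apply (actT g) ⟨x, hx⟩).trans (hcompat g ⟨x, hx⟩)
  obtain ⟨s, hs⟩ := multiple_mem_span_of_mem_localization_span S A (Set.range act) (ext E)
    (hact ▸ Submodule.mem_top)
  have hrange : Set.range act = ext '' Set.range actT := by
    rw [← Set.range_comp]; exact congrArg Set.range (funext fun g => (ext_act g).symm)
  rw [hrange, ← Submodule.map_span] at hs
  obtain ⟨F, hF, hFE⟩ := hs
  have hsE : F = s • E := ext_injective (hFE.trans (map_smul ext (s : R) E).symm)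
  exact ⟨s, hsE ▸ hF⟩

end Lattice

theorem exists_pow_smul_mem_span_of_span_eq_top {R K V G : Type*} [CommRing R] [IsDomain R]
    [IsDiscreteValuationRing R] {π : R} (hπ : Irreducible π) [Field K] [Algebra R K]
    [IsFractionRing R K] [AddCommGroup V] [Module K V] [Module R V] [IsScalarTower R K V]
    {T : Submodule R V} [T.IsLattice K] {act : G → Module.End K V}
    (hact : Submodule.span K (Set.range act) = ⊤) {actT : G → Module.End R T}
    (hcompat : ∀ g (x : T), (actT g x : V) = act g x) :
    ∃ k : ℕ, ∀ E : Module.End R T, π ^ k • E ∈ Submodule.span R (Set.range actT) := by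
  have : Module.Free R T := Submodule.IsLattice.free K T
  let A := Submodule.span R (Set.range actT)
  have htorsion : Module.IsTorsion R (Module.End R T ⧸ A) := by
    intro x
    obtain ⟨E, rfl⟩ := A.mkQ_surjective x
    obtain ⟨r, hr⟩ := exists_smul_mem_span_of_span_eq_top K (nonZeroDivisors R)
      Submodule.IsLattice.span_eq_top hact hcompat E
    exact ⟨r, (Submodule.Quotient.mk_eq_zero A).mpr hr⟩
  obtain ⟨k, hk⟩ := exists_pow_smul_eq_zero_of_isTorsion hπ htorsion
  exact ⟨k, fun E => (Submodule.Quotient.mk_eq_zero A).mp (hk (A.mkQ E))⟩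

theorem statement7_general {R K G V : Type*} [CommRing R] [IsDomain R] [IsDiscreteValuationRing R]
    {π : R} (hπ : Irreducible π) [Field K] [Algebra R K] [IsFractionRing R K] [Monoid G]
    [AddCommGroup V] [Module K V] [Module R V] [IsScalarTower R K V]
    (ρ : Representation K G V) (hirr : Algebra.adjoin K (Set.range ρ) = ⊤)
    (T : Submodule R V) (hTfg : T.FG) (hTspan : Submodule.span K (T : Set V) = ⊤)
    (ρT : Representation R G T) (hcompat : ∀ g (x : T), (ρT g x : V) = ρ g x) :
    ∃ 𝔫 : ℕ, ∀ a : R, ∃ d ≤ 𝔫, HasReducibilityDepth π (fun g => quotEnd a (ρT g)) d := by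
  have : T.IsLattice K := ⟨hTfg, hTspan⟩
  have : Module.Free R T := Submodule.IsLattice.free K T
  obtain ⟨k, hk⟩ := exists_pow_smul_mem_span_of_span_eq_top hπ
    (span_range_eq_top_of_adjoin_eq_top ρ hirr) hcompat
  exact ⟨k, fun a =>
    (reducibilityCond_quotEnd hπ.maximalIdeal_eq hk a).exists_hasReducibilityDepth_le⟩

/-- Let `p` be an odd prime, `Γ` a group, `V` a finite-dimensional
`ℚ_p`-vector space with an absolutely irreducible `Γ`-action, and `T ⊆ V` a `Γ`-stable
lattice such that the torsion subgroup of `Ext¹_{ℤ_p[Γ]}(T,T)` has finite exponent.  Then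
there is an integer `𝔫(T) ≥ 0` such that for every `n ≥ 1` the `Γ`-module `T/pⁿT` has
reducibility depth at most `𝔫(T)`. -/
theorem statement7 (p : ℕ) [Fact p.Prime] (hodd : Odd p)
    {Γ : Type} [Group Γ]
    {V : Type} [AddCommGroup V] [Module ℚ_[p] V] [FiniteDimensional ℚ_[p] V]
    [Module ℤ_[p] V] [IsScalarTower ℤ_[p] ℚ_[p] V]
    (ρ : Γ →* Module.End ℚ_[p] V)
    (hirr : Algebra.adjoin ℚ_[p] (Set.range fun g : Γ => (ρ g : Module.End ℚ_[p] V)) = ⊤)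
    (T : Submodule ℤ_[p] V) (hTfg : T.FG)
    (hTspan : Submodule.span ℚ_[p] (T : Set V) = ⊤)
    (ρT : Representation ℤ_[p] Γ T)
    (hcompat : ∀ g : Γ, ∀ x : T, ((ρT g x : V)) = ρ g (x : V))
    (hExt : ∃ m : ℕ, m ≠ 0 ∧ ∀ x : ExtOne p Γ T ρT,
      (∃ k : ℕ, k ≠ 0 ∧ k • x = 0) → m • x = 0) :
    ∃ 𝔫 : ℕ, ∀ n : ℕ, 1 ≤ n → ∃ d : ℕ, d ≤ 𝔫 ∧
      HasReducibilityDepth ((p : ℤ_[p]))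
        (fun g : Γ => quotEnd ((p : ℤ_[p]) ^ n) (ρT g)) d := by
  obtain ⟨k, hk⟩ := statement7_general PadicInt.prime_p.irreducible ρ hirr T hTfg hTspan ρT hcompat
  exact ⟨k, fun n _ => hk (p ^ n)⟩
end

section
/- Let p be a prime, n ≥ 1 an integer, M a finite free ℤ/pⁿ-module, and φ an automorphism of M. Suppose the characteristic polynomial of φ factors as χ_φ = f·g, where f and g are monic polynomials over ℤ/pⁿ whose reductions modulo p are coprime in 𝔽_p[X]. Then M = ker f(φ) ⊕ ker g(φ); both summands are φ-stable finite free ℤ/pⁿ-modules of ranks deg f and deg g respectively; this is the unique decomposition of M as a direct sum of φ-stable submodules annihilated by f(φ) and g(φ) respectively; and every endomorphism of M commuting with φ preserves each summand. -/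
/-!
The reductions of `f` and `g` have a unit resultant, hence so do `f` and `g`, which are therefore
coprime; with the Cayley–Hamilton theorem this splits `M` as `ker f(φ) ⊕ ker g(φ)`.

To compute the ranks, note that if `f` annihilates an endomorphism of a finite free module, then
its characteristic polynomial divides a power of `f` and so is coprime to `g`. After base change to
a residue field, the characteristic polynomials `χ₁`, `χ₂` of `φ` on the two summands satisfy
`χ₁ * χ₂ = f * g`, and coprimality forces `χ₁ = f` and `χ₂ = g`. Thus the summands are projective
of constant rank, hence free, over any semilocal ring.
-/

open Module Polynomial TensorProduct

section Polynomials

variable {R S : Type*} [CommRing R] [CommRing S]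

theorem isCoprime_of_isCoprime_map (q : R →+* S) [IsLocalHom q] {f g : R[X]} (hf : f.Monic)
    (h : IsCoprime (f.map q) (g.map q)) : IsCoprime f g := by
  obtain _ | _ := subsingleton_or_nontrivial S
  · have h0 : IsUnit (0 : R) := isUnit_of_map_unit q 0 (isUnit_of_subsingleton _)
    have : Subsingleton R := subsingleton_of_zero_eq_one (isUnit_zero_iff.mp h0)
    exact ⟨0, 0, Subsingleton.elim _ _⟩
  obtain ⟨k, hk⟩ := Nat.exists_eq_add_of_le (natDegree_map_le (f := q) (p := g))
  have hres : q (resultant f g) = resultant (f.map q) (g.map q) := by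
    rw [← resultant_map_map, hk, resultant_add_right_deg _ _ _ _ _ le_rfl, coeff_map,
      hf.coeff_natDegree, map_one, one_pow, one_mul, hf.natDegree_map]
  rw [← isUnit_resultant_iff_isCoprime hf]
  rw [← isUnit_resultant_iff_isCoprime (hf.map q), ← hres] at h
  exact isUnit_of_map_unit q _ h

theorem eq_of_monic_of_dvd_of_mul_eq_mul {a b f g : R[X]} (ha : a.Monic) (hb : b.Monic)
    (hf : f.Monic) (hg : g.Monic) (haf : a ∣ f) (hbg : b ∣ g) (h : a * b = f * g) : a = f := by
  obtain ⟨r, rfl⟩ := haf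
  obtain ⟨s, rfl⟩ := hbg
  have hr : r.Monic := ha.of_mul_monic_left hf
  have hs : s.Monic := hb.of_mul_monic_left hg
  have hdeg := congrArg natDegree h
  rw [ha.natDegree_mul hb, hf.natDegree_mul hg, ha.natDegree_mul hr, hb.natDegree_mul hs] at hdeg
  rw [eq_one_of_monic_natDegree_zero hr (by lia), mul_one]

end Polynomials

theorem isLocalHom_zmodCastHom_of_dvd_pow {m n k : ℕ} [NeZero n] (hmn : m ∣ n) (hnm : n ∣ m ^ k) :
    IsLocalHom (ZMod.castHom hmn (ZMod m)) where
  map_nonunit a ha := by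
    obtain ⟨a, rfl⟩ := ZMod.natCast_zmod_surjective a
    rw [map_natCast, ZMod.isUnit_iff_coprime] at ha
    exact (ZMod.isUnit_iff_coprime a n).mpr ((ha.pow_right k).coprime_dvd_right hnm)

section CharpolyDvd

variable {R : Type*} [CommRing R]

theorem charmatrix_dvd_algebraMap_of_aeval_eq_zero {ι : Type*} [Fintype ι] [DecidableEq ι]
    {A : Matrix ι ι R} {f : R[X]} (h : aeval A f = 0) :
    A.charmatrix ∣ algebraMap R[X] (Matrix ι ι R[X]) f := by
  -- Substitute the matrix `A` for `Y` in `X - Y ∣ f(X) - f(Y)`, an identity in `R[X][Y]`.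
  obtain ⟨q, hq⟩ : (C X - X : R[X][X]) ∣ C f - f.map C := by
    have := sub_dvd_eval_sub (C X) X ((f.map C).map C : R[X][X][X])
    rwa [eval_map, eval_map, eval₂_map, ← hom_eval₂, eval₂_C_X, eval₂_map] at this
  have hfA : aeval (C.mapMatrix A) (f.map C) = 0 := by
    have := aeval_algHom_apply (Algebra.ofId R R[X]).mapMatrix A f
    rw [h, map_zero] at this
    rw [← algebraMap_eq, aeval_map_algebraMap]
    exact this
  have hXA : aeval (C.mapMatrix A) (C X - X : R[X][X]) = A.charmatrix := by
    simp [Matrix.charmatrix, Matrix.algebraMap_eq_diagonal, Matrix.scalar_apply]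
  refine ⟨aeval (C.mapMatrix A) q, ?_⟩
  rw [← hXA, ← map_mul, ← hq, map_sub, hfA, sub_zero, aeval_C]

theorem matrix_charpoly_dvd_pow_of_aeval_eq_zero {ι : Type*} [Fintype ι] [DecidableEq ι]
    {A : Matrix ι ι R} {f : R[X]} (h : aeval A f = 0) : A.charpoly ∣ f ^ Fintype.card ι := by
  obtain ⟨Q, hQ⟩ := charmatrix_dvd_algebraMap_of_aeval_eq_zero h
  refine ⟨Q.det, ?_⟩
  rw [Matrix.charpoly, ← Matrix.det_mul, ← hQ, Matrix.algebraMap_eq_diagonal, Matrix.det_diagonal]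
  simp

variable {M : Type*} [AddCommGroup M] [Module R M] [Module.Finite R M] [Module.Free R M]

theorem charpoly_dvd_pow_of_aeval_eq_zero {φ : End R M} {f : R[X]} (h : aeval φ f = 0) :
    ∃ k, φ.charpoly ∣ f ^ k := by
  let b := Free.chooseBasis R M
  have hA : aeval (LinearMap.toMatrixAlgEquiv b φ) f = 0 := by
    rw [aeval_algHom_apply, h, map_zero]
  exact ⟨_, φ.charpoly_toMatrix b ▸ matrix_charpoly_dvd_pow_of_aeval_eq_zero hA⟩

theorem isCoprime_charpoly_of_aeval_eq_zero {φ : End R M} {f g : R[X]} (hfg : IsCoprime f g)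
    (h : aeval φ f = 0) : IsCoprime φ.charpoly g := by
  obtain ⟨k, hk⟩ := charpoly_dvd_pow_of_aeval_eq_zero h
  exact hfg.pow_left.of_isCoprime_of_dvd_left hk

theorem charpoly_eq_of_charpoly_mul_charpoly_eq {N : Type*} [AddCommGroup N] [Module R N]
    [Module.Finite R N] [Module.Free R N] {φ : End R M} {ψ : End R N} {f g : R[X]}
    (hf : f.Monic) (hg : g.Monic) (hfg : IsCoprime f g) (hφ : aeval φ f = 0) (hψ : aeval ψ g = 0)
    (h : φ.charpoly * ψ.charpoly = f * g) : φ.charpoly = f :=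
  eq_of_monic_of_dvd_of_mul_eq_mul φ.charpoly_monic ψ.charpoly_monic hf hg
    ((isCoprime_charpoly_of_aeval_eq_zero hfg hφ).dvd_of_dvd_mul_right (h ▸ dvd_mul_right _ _))
    ((isCoprime_charpoly_of_aeval_eq_zero hfg.symm hψ).dvd_of_dvd_mul_left (h ▸ dvd_mul_left _ _))
    h

end CharpolyDvd

section InvariantSubmodules

variable {R M : Type*} [CommRing R] [AddCommGroup M] [Module R M] {φ : End R M}

theorem apply_mem_ker_aeval_of_commute {ψ : End R M} (h : Commute ψ φ) (f : R[X]) :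
    ∀ x ∈ LinearMap.ker (aeval φ f), ψ x ∈ LinearMap.ker (aeval φ f) := by
  have hcomm : Commute ψ (aeval φ f) :=
    Algebra.commute_of_mem_adjoin_singleton_of_commute (aeval_mem_adjoin_singleton R φ) h
  intro x hx
  rw [LinearMap.mem_ker] at hx ⊢
  rw [← End.mul_apply, ← hcomm.eq, End.mul_apply, hx, map_zero]

theorem coe_aeval_restrict_apply {N : Submodule R M} (hN : ∀ x ∈ N, φ x ∈ N) (f : R[X]) (x : N) :
    (aeval (φ.restrict hN) f x : M) = aeval φ f x := by
  simp only [aeval_eq_sum_range, LinearMap.sum_apply, LinearMap.smul_apply, End.pow_restrict _,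
    Submodule.coe_sum, Submodule.coe_smul, LinearMap.coe_restrict_apply]

theorem aeval_restrict_ker_aeval_eq_zero {f : R[X]}
    (h : ∀ x ∈ LinearMap.ker (aeval φ f), φ x ∈ LinearMap.ker (aeval φ f)) :
    aeval (φ.restrict h) f = 0 :=
  LinearMap.ext fun x ↦ Subtype.ext <| (coe_aeval_restrict_apply h f x).trans x.2

theorem isCompl_ker_aeval_of_isCoprime {f g : R[X]} (hfg : IsCoprime f g)
    (h : aeval φ (f * g) = 0) :
    IsCompl (LinearMap.ker (aeval φ f)) (LinearMap.ker (aeval φ g)) where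
  disjoint := disjoint_ker_aeval_of_isCoprime φ hfg
  codisjoint := by
    rw [codisjoint_iff, sup_ker_aeval_eq_ker_aeval_mul_of_coprime φ hfg, h, LinearMap.ker_zero]

theorem conj_prodEquivOfIsCompl_prodMap_restrict {N₁ N₂ : Submodule R M} (hN : IsCompl N₁ N₂)
    (h₁ : ∀ x ∈ N₁, φ x ∈ N₁) (h₂ : ∀ x ∈ N₂, φ x ∈ N₂) :
    (N₁.prodEquivOfIsCompl N₂ hN).conj ((φ.restrict h₁).prodMap (φ.restrict h₂)) = φ := by
  ext x
  obtain ⟨⟨y, z⟩, rfl⟩ := (N₁.prodEquivOfIsCompl N₂ hN).surjective x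
  simp [LinearEquiv.conj_apply]

theorem finite_of_isCompl [Module.Finite R M] {N₁ N₂ : Submodule R M} (h : IsCompl N₁ N₂) :
    Module.Finite R N₁ :=
  .of_surjective (N₁.projectionOnto N₂ h) (Submodule.projectionOnto_surjective h)

theorem projective_of_isCompl [Module.Projective R M] {N₁ N₂ : Submodule R M}
    (h : IsCompl N₁ N₂) : Module.Projective R N₁ :=
  .of_split N₁.subtype (N₁.projectionOnto N₂ h) (Submodule.projectionOnto_comp_subtype h)

end InvariantSubmodules

theorem isCompl_left_unique_of_le {α : Type*} [Lattice α] [BoundedOrder α] [IsModularLattice α]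
    {a b c d : α} (hab : IsCompl a b) (hcd : IsCompl c d) (hac : a ≤ c) (hbd : b ≤ d) : a = c :=
  eq_of_le_of_inf_le_of_le_sup (z := b) hac
    ((hcd.disjoint.mono_right hbd).le_bot.trans bot_le) (hab.sup_eq_top ▸ le_top)

section BaseChange

variable {R M : Type*} [CommRing R] [AddCommGroup M] [Module R M]

theorem aeval_baseChange_map (K : Type*) [CommRing K] [Algebra R K] (φ : End R M) (f : R[X]) :
    aeval (φ.baseChange K) (f.map (algebraMap R K)) = (aeval φ f).baseChange K := by
  rw [aeval_map_algebraMap]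
  exact aeval_algHom_apply (End.baseChangeHom R K M) φ f

variable [Module.Finite R M] [Module.Free R M]

theorem map_charpoly_conj_prodMap (K : Type*) [CommRing K] [Algebra R K] {N₁ N₂ : Type*}
    [AddCommGroup N₁] [Module R N₁] [AddCommGroup N₂] [Module R N₂]
    [Module.Finite R N₁] [Module.Finite R N₂] [Module.Free K (K ⊗[R] N₁)]
    [Module.Free K (K ⊗[R] N₂)] (e : (N₁ × N₂) ≃ₗ[R] M) (φ₁ : End R N₁) (φ₂ : End R N₂) :
    (e.conj (φ₁.prodMap φ₂)).charpoly.map (algebraMap R K) =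
      (φ₁.baseChange K).charpoly * (φ₂.baseChange K).charpoly := by
  let e' : (K ⊗[R] N₁ × K ⊗[R] N₂) ≃ₗ[K] K ⊗[R] M :=
    (TensorProduct.prodRight R K K N₁ N₂).symm ≪≫ₗ e.baseChange R K _ _
  have he' : e'.conj ((φ₁.baseChange K).prodMap (φ₂.baseChange K)) =
      (e.conj (φ₁.prodMap φ₂)).baseChange K := by
    ext x
    obtain ⟨⟨y, z⟩, rfl⟩ := e.surjective x
    simp [e', LinearEquiv.conj_apply]
  rw [← LinearMap.charpoly_baseChange, ← he', LinearEquiv.charpoly_conj,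
    LinearMap.charpoly_prodMap]

theorem finrank_tensorProduct_ker_aeval {φ : End R M} {f g : R[X]} (hf : f.Monic) (hg : g.Monic)
    (hfg : IsCoprime f g) (hφ : φ.charpoly = f * g) (K : Type*) [Field K] [Algebra R K] :
    finrank K (K ⊗[R] LinearMap.ker (aeval φ f)) = f.natDegree := by
  have hcompl := isCompl_ker_aeval_of_isCoprime hfg (hφ ▸ φ.aeval_self_charpoly)
  have := finite_of_isCompl hcompl
  have := finite_of_isCompl hcompl.symm
  have hf_inv := apply_mem_ker_aeval_of_commute (Commute.refl φ) f
  have hg_inv := apply_mem_ker_aeval_of_commute (Commute.refl φ) g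
  have hmul : ((φ.restrict hf_inv).baseChange K).charpoly *
      ((φ.restrict hg_inv).baseChange K).charpoly =
      f.map (algebraMap R K) * g.map (algebraMap R K) := by
    rw [← map_charpoly_conj_prodMap K (Submodule.prodEquivOfIsCompl _ _ hcompl),
      conj_prodEquivOfIsCompl_prodMap_restrict, hφ, Polynomial.map_mul]
  have hchar : ((φ.restrict hf_inv).baseChange K).charpoly = f.map (algebraMap R K) := by
    refine charpoly_eq_of_charpoly_mul_charpoly_eq (hf.map _) (hg.map _)
      (hfg.map (mapRingHom (algebraMap R K))) ?_ ?_ hmul <;>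
    rw [aeval_baseChange_map, aeval_restrict_ker_aeval_eq_zero, LinearMap.baseChange_zero]
  rw [← LinearMap.charpoly_natDegree, hchar, hf.natDegree_map]

theorem nonempty_basis_ker_aeval [Finite (MaximalSpectrum R)] {φ : End R M} {f g : R[X]}
    (hf : f.Monic) (hg : g.Monic) (hfg : IsCoprime f g) (hφ : φ.charpoly = f * g) :
    Nonempty (Basis (Fin f.natDegree) R (LinearMap.ker (aeval φ f))) := by
  have hcompl := isCompl_ker_aeval_of_isCoprime hfg (hφ ▸ φ.aeval_self_charpoly)
  have := finite_of_isCompl hcompl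
  have := projective_of_isCompl hcompl
  let := @Ideal.Quotient.field
  exact nonempty_basis_of_flat_of_finrank_eq R _ _ fun P ↦
    finrank_tensorProduct_ker_aeval hf hg hfg hφ (R ⧸ P.asIdeal)

end BaseChange

theorem statement9_general {R M : Type*} [CommRing R] [Nontrivial R] [Finite (MaximalSpectrum R)]
    [AddCommGroup M] [Module R M] [Module.Finite R M] [Module.Free R M] (φ : End R M)
    (f g : R[X]) (hf : f.Monic) (hg : g.Monic) (hφ : φ.charpoly = f * g) (hfg : IsCoprime f g) :
    IsCompl (LinearMap.ker (aeval φ f)) (LinearMap.ker (aeval φ g)) ∧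
    (∀ x ∈ LinearMap.ker (aeval φ f), φ x ∈ LinearMap.ker (aeval φ f)) ∧
    (∀ x ∈ LinearMap.ker (aeval φ g), φ x ∈ LinearMap.ker (aeval φ g)) ∧
    Module.Finite R (LinearMap.ker (aeval φ f)) ∧
    Module.Free R (LinearMap.ker (aeval φ f)) ∧
    finrank R (LinearMap.ker (aeval φ f)) = f.natDegree ∧
    Module.Finite R (LinearMap.ker (aeval φ g)) ∧
    Module.Free R (LinearMap.ker (aeval φ g)) ∧
    finrank R (LinearMap.ker (aeval φ g)) = g.natDegree ∧
    (∀ N₁ N₂ : Submodule R M, (∀ x ∈ N₁, φ x ∈ N₁) → (∀ x ∈ N₂, φ x ∈ N₂) →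
      (∀ x ∈ N₁, aeval φ f x = 0) → (∀ x ∈ N₂, aeval φ g x = 0) → IsCompl N₁ N₂ →
      N₁ = LinearMap.ker (aeval φ f) ∧ N₂ = LinearMap.ker (aeval φ g)) ∧
    (∀ ψ : End R M, Commute ψ φ →
      (∀ x ∈ LinearMap.ker (aeval φ f), ψ x ∈ LinearMap.ker (aeval φ f)) ∧
      (∀ x ∈ LinearMap.ker (aeval φ g), ψ x ∈ LinearMap.ker (aeval φ g))) := by
  have hcompl := isCompl_ker_aeval_of_isCoprime hfg (hφ ▸ φ.aeval_self_charpoly)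
  have hinv := apply_mem_ker_aeval_of_commute (Commute.refl φ)
  obtain ⟨b₁⟩ := nonempty_basis_ker_aeval hf hg hfg hφ
  obtain ⟨b₂⟩ := nonempty_basis_ker_aeval hg hf hfg.symm (hφ.trans (mul_comm f g))
  refine ⟨hcompl, hinv f, hinv g, .of_basis b₁, .of_basis b₁, by simp [finrank_eq_card_basis b₁],
    .of_basis b₂, .of_basis b₂, by simp [finrank_eq_card_basis b₂], ?unique, ?commute⟩
  case unique =>
    intro N₁ N₂ _ _ h₁ h₂ hN
    exact ⟨isCompl_left_unique_of_le hN hcompl h₁ h₂,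
      isCompl_left_unique_of_le hN.symm hcompl.symm h₂ h₁⟩
  case commute =>
    exact fun ψ hψ ↦ ⟨apply_mem_ker_aeval_of_commute hψ f, apply_mem_ker_aeval_of_commute hψ g⟩

/-- Let `p` be a prime, `n ≥ 1`, `M` a finite free `ℤ/pⁿ`-module and `φ` an
automorphism of `M` whose characteristic polynomial factors as `χ_φ = f·g` with `f`, `g` monic
and coprime modulo `p`.  Then `M = ker f(φ) ⊕ ker g(φ)`, both summands are `φ`-stable finite
free modules of ranks `deg f` and `deg g`, the decomposition is the unique one into `φ`-stable
submodules annihilated by `f(φ)` resp. `g(φ)`, and every endomorphism commuting with `φ`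
preserves both summands. -/
theorem statement9 (p n : ℕ) (hp : p.Prime) (hn : 1 ≤ n)
    {M : Type*} [AddCommGroup M] [Module (ZMod (p ^ n)) M]
    [Module.Finite (ZMod (p ^ n)) M] [Module.Free (ZMod (p ^ n)) M]
    (φ : Module.End (ZMod (p ^ n)) M) (hφ : IsUnit φ)
    (f g : Polynomial (ZMod (p ^ n))) (hf : f.Monic) (hg : g.Monic)
    (hfg : LinearMap.charpoly φ = f * g)
    (hcop : IsCoprime
      (f.map (ZMod.castHom (dvd_pow_self p (Nat.one_le_iff_ne_zero.mp hn)) (ZMod p)))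
      (g.map (ZMod.castHom (dvd_pow_self p (Nat.one_le_iff_ne_zero.mp hn)) (ZMod p)))) :
    IsCompl (LinearMap.ker (Polynomial.aeval φ f)) (LinearMap.ker (Polynomial.aeval φ g)) ∧
    (∀ x ∈ LinearMap.ker (Polynomial.aeval φ f), φ x ∈ LinearMap.ker (Polynomial.aeval φ f)) ∧
    (∀ x ∈ LinearMap.ker (Polynomial.aeval φ g), φ x ∈ LinearMap.ker (Polynomial.aeval φ g)) ∧
    Module.Finite (ZMod (p ^ n)) (LinearMap.ker (Polynomial.aeval φ f)) ∧
    Module.Free (ZMod (p ^ n)) (LinearMap.ker (Polynomial.aeval φ f)) ∧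
    Module.finrank (ZMod (p ^ n)) (LinearMap.ker (Polynomial.aeval φ f)) = f.natDegree ∧
    Module.Finite (ZMod (p ^ n)) (LinearMap.ker (Polynomial.aeval φ g)) ∧
    Module.Free (ZMod (p ^ n)) (LinearMap.ker (Polynomial.aeval φ g)) ∧
    Module.finrank (ZMod (p ^ n)) (LinearMap.ker (Polynomial.aeval φ g)) = g.natDegree ∧
    (∀ N₁ N₂ : Submodule (ZMod (p ^ n)) M,
      (∀ x ∈ N₁, φ x ∈ N₁) → (∀ x ∈ N₂, φ x ∈ N₂) →
      (∀ x ∈ N₁, Polynomial.aeval φ f x = 0) → (∀ x ∈ N₂, Polynomial.aeval φ g x = 0) →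
      IsCompl N₁ N₂ →
      N₁ = LinearMap.ker (Polynomial.aeval φ f) ∧ N₂ = LinearMap.ker (Polynomial.aeval φ g)) ∧
    (∀ ψ : Module.End (ZMod (p ^ n)) M, Commute ψ φ →
      (∀ x ∈ LinearMap.ker (Polynomial.aeval φ f), ψ x ∈ LinearMap.ker (Polynomial.aeval φ f)) ∧
      (∀ x ∈ LinearMap.ker (Polynomial.aeval φ g), ψ x ∈ LinearMap.ker (Polynomial.aeval φ g))) := by
  have hn0 : n ≠ 0 := Nat.one_le_iff_ne_zero.mp hn
  have := NeZero.mk hp.ne_zero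
  have := Fact.mk (Nat.one_lt_pow hn0 hp.one_lt)
  have := isLocalHom_zmodCastHom_of_dvd_pow (dvd_pow_self p hn0) dvd_rfl
  exact statement9_general φ f g hf hg hfg (isCoprime_of_isCoprime_map _ hf hcop)
end
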